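/- arXiv:2109.09877 — 3 statements merged into one kernel-verified Lean document; each statement's English description precedes it below -/
import Mathlib

section
/- Let p > 3 be a prime. Then ∑_{k=1}^{(p-1)/2} (p/2 - k)·H_k^2/((p+1-2k)(p+2k)) ≡ 4·q_p(2) - 6·q_p(2)^2 + 2·q_p(2)^3 + (1/8)·B_{p-3} modulo p (as rational numbers). -/
/-- Two rationals `a` and `b` are congruent modulo `p^r`:
the `p`-adic valuation of `a - b` is at least `r`, i.e. `a - b = c * p^r`
with the denominator of `c` not divisible by `p`. -/
def ratCongr (p r : ℕ) (a b : ℚ) : Prop :=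
  ∃ c : ℚ, a - b = c * (p : ℚ) ^ r ∧ ¬ (p ∣ c.den)

/-- The Fermat quotient `q_p(2) = (2^(p-1) - 1)/p` (an integer for odd primes),
viewed as a rational number. -/
def fermatQ (p : ℕ) : ℚ := ((2 : ℚ) ^ (p - 1) - 1) / p

open Finset

/-!
Write `p = 2n + 1` and `N = n + 1`. Modulo `p` the summand is `-H_k² / (4 (N - k))`, so the sum is
`-1/4` times the convolution of `H_k²` with the reciprocals. For `k < N` the partial fraction
`1/(k (N - k)) = (1/k + 1/(N - k)) / N` makes this convolution compatible with partial summation,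
and in every field where `1, …, N` are nonzero it yields
`∑_{k < N} H_k² / (N - k) = H_N³ - H_N H_N^{(2)} - ∑_{i < j ≤ N} 1/(i² j)`.

The multiple harmonic sum is evaluated at `n` by computing `∑_{k < n} H_k^{(2)} / (n - k)` twice:
once as above, and once through the behaviour of `H_k^{(2)}` under `k ↦ p - 1 - k` and `k ↦ n - k`
modulo `p`. The result is that four times the multiple harmonic sum is `-H_n^{(3)}`. Finally
`H_n ≡ -2 q_p(2)`, by expanding `2^p` binomially, and `H_n^{(3)} ≡ -2 B_{p-3}`, by Faulhaber's
formula at `n + 1 ≡ 1/2`.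
-/

section Convolution

variable {K : Type*} [Field K]

/-- The generalized harmonic number `H_n^{(r)} = ∑_{j=1}^n 1/j^r`, as an element of the field `K`;
the summation index is `k = j - 1`. -/
def powHarmonic (r n : ℕ) : K := ∑ k ∈ range n, (k + 1 : K)⁻¹ ^ r

/-- The multiple harmonic sum `∑_{1 ≤ i < j ≤ n} 1/(i^r j)`, as an element of the field `K`;
the summation index is `k = j - 1`. -/
def nestedHarmonic (r n : ℕ) : K := ∑ k ∈ range n, powHarmonic r k / (k + 1 : K)

/-- The convolution `∑_{k < n} f k / (n - k)` of `f` with the sequence of reciprocals. -/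
def invConv (f : ℕ → K) (n : ℕ) : K := ∑ k ∈ range n, f k / (n - k : K)

@[simp]
theorem powHarmonic_zero_right (r : ℕ) : powHarmonic r 0 = (0 : K) := sum_range_zero _

theorem powHarmonic_succ (r n : ℕ) :
    (powHarmonic r (n + 1) : K) = powHarmonic r n + (n + 1 : K)⁻¹ ^ r := sum_range_succ _ _

theorem nestedHarmonic_succ (r n : ℕ) :
    (nestedHarmonic r (n + 1) : K) = nestedHarmonic r n + powHarmonic r n / (n + 1 : K) :=
  sum_range_succ _ _

theorem invConv_eq_sum_reflect (f : ℕ → K) (n : ℕ) :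
    invConv f n = ∑ k ∈ range n, f (n - 1 - k) / (k + 1 : K) := by
  rw [invConv, ← sum_range_reflect]
  refine sum_congr rfl fun k hk => ?_
  have hcast : (n : K) - (n - 1 - k : ℕ) = k + 1 := by
    obtain ⟨j, rfl⟩ := Nat.exists_eq_add_of_lt (mem_range.1 hk)
    rw [show k + j + 1 - 1 - k = j by omega]
    push_cast
    ring
  rw [hcast]

theorem invConv_one (n : ℕ) : invConv (fun _ => 1) n = (powHarmonic 1 n : K) := by
  simp only [invConv_eq_sum_reflect, powHarmonic, pow_one, one_div]

theorem invConv_add (f g : ℕ → K) (n : ℕ) :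
    invConv (fun k => f k + g k) n = invConv f n + invConv g n := by
  simp only [invConv, add_div, sum_add_distrib]

theorem invConv_const_mul (c : K) (f : ℕ → K) (n : ℕ) :
    invConv (fun k => c * f k) n = c * invConv f n := by
  simp only [invConv, mul_div_assoc, mul_sum]

-- The partial fraction `1/((k+1)(n-k)) = (1/(k+1) + 1/(n-k)) / (n+1)`, summed against `g`.
theorem invConv_div_add_one {n : ℕ} (hn : ∀ k < n + 1, (k + 1 : K) ≠ 0) (g : ℕ → K) :
    invConv (fun k => g k / (k + 1)) n =
      (∑ k ∈ range n, g k / (k + 1) + invConv g n) / (n + 1) := by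
  rw [invConv, invConv, ← sum_add_distrib, sum_div]
  refine sum_congr rfl fun k hk => ?_
  obtain ⟨j, rfl⟩ := Nat.exists_eq_add_of_lt (mem_range.1 hk)
  have hk0 := hn k (by omega)
  have hn0 := hn (k + j + 1) (by omega)
  have hsub : ((k + j + 1 : ℕ) : K) - k = j + 1 := by push_cast; ring
  have hj0 := hn j (by omega)
  rw [hsub]
  push_cast at hn0 ⊢
  field_simp
  ring

theorem invConv_succ {n : ℕ} (hn : ∀ k < n + 1, (k + 1 : K) ≠ 0) {f g : ℕ → K} (hf0 : f 0 = 0)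
    (hf : ∀ k, f (k + 1) = f k + g k / (k + 1)) :
    invConv f (n + 1) = invConv f n + (f n + invConv g n) / (n + 1) := by
  have hfn : f n = ∑ k ∈ range n, g k / (k + 1) := by
    simpa only [hf, add_sub_cancel_left, hf0, sub_zero] using (sum_range_sub f n).symm
  rw [hfn, ← invConv_div_add_one hn, ← invConv_add, invConv, sum_range_succ', hf0, zero_div,
    add_zero]
  refine sum_congr rfl fun k _ => ?_
  rw [hf]
  push_cast
  rw [add_sub_add_right_eq_sub]

theorem invConv_inv {n : ℕ} (hn : ∀ k < n + 1, (k + 1 : K) ≠ 0) :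
    invConv (fun k => (k + 1 : K)⁻¹) n = 2 * powHarmonic 1 n / (n + 1) := by
  have h := invConv_div_add_one hn fun _ => 1
  simp only [invConv_one, one_div] at h
  rw [h, two_mul, powHarmonic]
  simp only [pow_one]

theorem invConv_powHarmonic_one {n : ℕ} (hn : ∀ k < n, (k + 1 : K) ≠ 0) :
    invConv (powHarmonic 1) n = (powHarmonic 1 n ^ 2 - powHarmonic 2 n : K) := by
  induction n with
  | zero => simp [invConv]
  | succ n ih =>
    have hstep (k : ℕ) : (powHarmonic 1 (k + 1) : K) = powHarmonic 1 k + 1 / (k + 1) := by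
      rw [powHarmonic_succ, pow_one, one_div]
    rw [invConv_succ hn (powHarmonic_zero_right 1) hstep, ih fun k hk => hn k (by omega),
      invConv_one, powHarmonic_succ, powHarmonic_succ]
    ring

theorem invConv_powHarmonic_two {n : ℕ} (hn : ∀ k < n, (k + 1 : K) ≠ 0) :
    invConv (powHarmonic 2) n =
      (2 * powHarmonic 1 n * powHarmonic 2 n - 2 * powHarmonic 3 n - nestedHarmonic 2 n : K) := by
  induction n with
  | zero => simp [invConv, nestedHarmonic]
  | succ n ih =>
    have hstep (k : ℕ) :
        (powHarmonic 2 (k + 1) : K) = powHarmonic 2 k + (k + 1 : K)⁻¹ / (k + 1) := by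
      rw [powHarmonic_succ]
      ring
    rw [invConv_succ hn (powHarmonic_zero_right 2) hstep, ih fun k hk => hn k (by omega),
      invConv_inv hn]
    simp only [powHarmonic_succ, nestedHarmonic_succ]
    ring

theorem invConv_powHarmonic_one_sq {n : ℕ} (hn : ∀ k < n, (k + 1 : K) ≠ 0) :
    invConv (fun k => powHarmonic 1 k ^ 2) n =
      (powHarmonic 1 n ^ 3 - powHarmonic 1 n * powHarmonic 2 n - nestedHarmonic 2 n : K) := by
  induction n with
  | zero => simp [invConv, nestedHarmonic]
  | succ n ih =>
    have hstep (k : ℕ) : (powHarmonic 1 (k + 1) : K) ^ 2 =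
        powHarmonic 1 k ^ 2 + (2 * powHarmonic 1 k + (k + 1 : K)⁻¹) / (k + 1) := by
      rw [powHarmonic_succ]
      ring
    have hn' : ∀ k < n, (k + 1 : K) ≠ 0 := fun k hk => hn k (by omega)
    rw [invConv_succ hn (by rw [powHarmonic_zero_right, zero_pow two_ne_zero]) hstep, ih hn',
      invConv_add, invConv_const_mul, invConv_powHarmonic_one hn', invConv_inv hn]
    simp only [powHarmonic_succ, nestedHarmonic_succ]
    ring

end Convolution

section HalfRange

theorem sum_range_two_mul_eq_sum_add_reflect {M : Type*} [AddCommMonoid M] (f : ℕ → M) (n : ℕ) :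
    ∑ m ∈ range (2 * n), f m = ∑ k ∈ range n, (f k + f (2 * n - 1 - k)) := by
  rw [two_mul, sum_range_add, sum_add_distrib, ← sum_range_reflect fun k => f (n + k)]
  congr 1
  refine sum_congr rfl fun k hk => congrArg f ?_
  have := mem_range.1 hk
  omega

theorem sum_range_two_mul_eq_sum_even_add_odd {M : Type*} [AddCommMonoid M] (f : ℕ → M) (n : ℕ) :
    ∑ m ∈ range (2 * n), f m = ∑ k ∈ range n, (f (2 * k) + f (2 * k + 1)) := by
  induction n with
  | zero => simp
  | succ n ih => rw [mul_add_one, sum_range_succ, sum_range_succ, ih, sum_range_succ, add_assoc]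

theorem sum_range_two_mul_eq_sum_odd_add_reflect {M : Type*} [AddCommMonoid M] (f : ℕ → M)
    (n : ℕ) :
    ∑ m ∈ range (2 * n), f m =
      ∑ k ∈ range n, (f (2 * k + 1) + f (2 * n - 1 - (2 * k + 1))) := by
  rw [sum_range_two_mul_eq_sum_even_add_odd, sum_add_distrib, sum_add_distrib, add_comm,
    ← sum_range_reflect fun k => f (2 * k)]
  congr 1
  refine sum_congr rfl fun k hk => congrArg f ?_
  have := mem_range.1 hk
  omega

variable {K : Type*} [Field K] {n : ℕ} [CharP K (2 * n + 1)]

variable (K n) in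
theorem two_mul_natCast_eq_neg_one : (2 * n : K) = -1 := by
  rw [← add_eq_zero_iff_eq_neg]
  exact_mod_cast CharP.cast_eq_zero K (2 * n + 1)

theorem two_ne_zero_of_odd_char (K : Type*) [Field K] (n : ℕ) [CharP K (2 * n + 1)] :
    (2 : K) ≠ 0 := fun h => by
  simpa [h] using two_mul_natCast_eq_neg_one K n

theorem four_ne_zero_of_odd_char (K : Type*) [Field K] (n : ℕ) [CharP K (2 * n + 1)] :
    (4 : K) ≠ 0 := by
  rw [show (4 : K) = 2 ^ 2 by norm_num]
  exact pow_ne_zero 2 (two_ne_zero_of_odd_char K n)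

theorem eight_ne_zero_of_odd_char (K : Type*) [Field K] (n : ℕ) [CharP K (2 * n + 1)] :
    (8 : K) ≠ 0 := by
  rw [show (8 : K) = 2 ^ 3 by norm_num]
  exact pow_ne_zero 3 (two_ne_zero_of_odd_char K n)

variable (K) in
theorem natCast_add_one_ne_zero_of_lt {k : ℕ} (hk : k < 2 * n) : (k + 1 : K) ≠ 0 := by
  exact_mod_cast (CharP.cast_eq_zero_iff K (2 * n + 1) (k + 1)).not.2
    (Nat.not_dvd_of_pos_of_lt k.succ_pos (by omega))

variable (K) in
theorem three_ne_zero_of_odd_char (hn : 1 < n) : (3 : K) ≠ 0 := by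
  have h := natCast_add_one_ne_zero_of_lt K (n := n) (k := 2) (by omega)
  rwa [Nat.cast_ofNat, two_add_one_eq_three] at h

variable (K) in
theorem natCast_add_one_reflect {j k : ℕ} (hjk : j + k + 1 = 2 * n) : (j + 1 : K) = -(k + 1) := by
  have hsum : (j + k + 1 : K) = 2 * n := by exact_mod_cast congrArg (Nat.cast (R := K)) hjk
  rw [two_mul_natCast_eq_neg_one] at hsum
  linear_combination hsum

theorem powHarmonic_add_powHarmonic_reflect (r : ℕ) {j k : ℕ} (hjk : j + k = 2 * n) :
    (powHarmonic r j + (-1) ^ r * powHarmonic r k : K) = powHarmonic r (2 * n) := by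
  induction k generalizing j with
  | zero => simp [← hjk]
  | succ k ih =>
    rw [← ih (j := j + 1) (by omega), powHarmonic_succ, powHarmonic_succ,
      natCast_add_one_reflect K (by omega : j + k + 1 = 2 * n), inv_neg, neg_pow]
    ring

theorem powHarmonic_half_reflect (r : ℕ) {j k : ℕ} (hjk : j + k = n) :
    (powHarmonic r j : K) =
      powHarmonic r n + (-1) ^ r * powHarmonic r k - (-2) ^ r * powHarmonic r (2 * k) := by
  induction k generalizing j with
  | zero => simp [← hjk]
  | succ k ih =>
    have h2 := two_ne_zero_of_odd_char K n
    have hodd : (j + 1 : K)⁻¹ ^ r = (-2) ^ r * (2 * k + 1 : K)⁻¹ ^ r := by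
      have hsum : (j + (k + 1) : K) = n := by exact_mod_cast congrArg (Nat.cast (R := K)) hjk
      have hcast : (2 * k + 1 : K) = -2 * (j + 1) := by
        linear_combination two_mul_natCast_eq_neg_one K n + 2 * hsum
      rw [hcast, mul_inv, ← mul_pow, mul_inv_cancel_left₀ (neg_ne_zero.2 h2)]
    have heven : (-2) ^ r * (2 * k + 1 + 1 : K)⁻¹ ^ r = (-1) ^ r * (k + 1 : K)⁻¹ ^ r := by
      rw [show (2 * k + 1 + 1 : K) = 2 * (k + 1) by ring, ← mul_pow, ← mul_pow]
      field_simp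
    have := ih (j := j + 1) (by omega)
    rw [powHarmonic_succ, hodd] at this
    rw [mul_add_one, powHarmonic_succ, powHarmonic_succ, powHarmonic_succ]
    push_cast
    linear_combination this + heven

variable (K n) in
theorem powHarmonic_one_two_mul : (powHarmonic 1 (2 * n) : K) = 0 := by
  rw [← powHarmonic_add_powHarmonic_reflect 1 (two_mul n).symm]
  ring

theorem powHarmonic_two_half (h3 : (3 : K) ≠ 0) : (powHarmonic 2 n : K) = 0 := by
  have hsum := powHarmonic_add_powHarmonic_reflect (K := K) 2 (two_mul n).symm
  have hhalf := powHarmonic_half_reflect (K := K) 2 (zero_add n)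
  rw [powHarmonic_zero_right, ← hsum] at hhalf
  have h6 : (2 * 3 * powHarmonic 2 n : K) = 0 := by linear_combination hhalf
  simpa [two_ne_zero_of_odd_char K n, h3] using h6

theorem powHarmonic_two_reflect (h3 : (3 : K) ≠ 0) {j k : ℕ} (hjk : j + k = 2 * n) :
    (powHarmonic 2 j : K) = -powHarmonic 2 k := by
  have hsum := powHarmonic_add_powHarmonic_reflect (K := K) 2 hjk
  have hhalf := powHarmonic_add_powHarmonic_reflect (K := K) 2 (two_mul n).symm
  rw [powHarmonic_two_half h3] at hhalf
  linear_combination hsum - hhalf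

theorem sum_powHarmonic_two_even (h3 : (3 : K) ≠ 0) :
    ∑ k ∈ range n, powHarmonic 2 (2 * (k + 1)) / (k + 1 : K) =
      2 * nestedHarmonic 2 n + 9 / 8 * powHarmonic 3 n := by
  -- Sum `f` over `range (2 * n)` in two ways: pairing `k` with its reflection for `k < n`, or
  -- pairing each odd index with its reflection, which is even.
  let f (m : ℕ) : K := powHarmonic 2 (m + 1) / (m + 1)
  have hreflect {m : ℕ} (hm : m < 2 * n) : f (2 * n - 1 - m) = f m - (m + 1 : K)⁻¹ ^ 3 := by
    simp only [f]
    rw [natCast_add_one_reflect K (by omega : 2 * n - 1 - m + m + 1 = 2 * n),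
      powHarmonic_two_reflect h3 (by omega : 2 * n - 1 - m + 1 + m = 2 * n),
      powHarmonic_succ, neg_div_neg_eq]
    ring
  have hends : ∑ k ∈ range n, (f k + f (2 * n - 1 - k)) =
      2 * nestedHarmonic 2 n + powHarmonic 3 n := by
    rw [nestedHarmonic, powHarmonic, mul_sum, ← sum_add_distrib]
    refine sum_congr rfl fun k hk => ?_
    rw [hreflect (by have := mem_range.1 hk; omega)]
    simp only [f, powHarmonic_succ]
    ring
  have hodds : ∑ k ∈ range n, (f (2 * k + 1) + f (2 * n - 1 - (2 * k + 1))) =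
      ∑ k ∈ range n, powHarmonic 2 (2 * (k + 1)) / (k + 1 : K) - 1 / 8 * powHarmonic 3 n := by
    rw [powHarmonic, mul_sum, ← sum_sub_distrib]
    refine sum_congr rfl fun k hk => ?_
    have hk0 : (k + 1 : K) ≠ 0 :=
      natCast_add_one_ne_zero_of_lt K (n := n) (by have := mem_range.1 hk; omega)
    have h2 := two_ne_zero_of_odd_char K n
    have hcast : ((2 * k + 1 : ℕ) + 1 : K) = 2 * (k + 1) := by push_cast; ring
    rw [hreflect (by have := mem_range.1 hk; omega)]
    simp only [f]
    rw [hcast, show 2 * k + 1 + 1 = 2 * (k + 1) by ring, show (8 : K) = 2 ^ 3 by norm_num]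
    field_simp
    ring
  rw [← sum_range_two_mul_eq_sum_odd_add_reflect, sum_range_two_mul_eq_sum_add_reflect,
    hends] at hodds
  have h8 := eight_ne_zero_of_odd_char K n
  field_simp at hodds ⊢
  linear_combination -hodds

theorem invConv_powHarmonic_two_half (h3 : (3 : K) ≠ 0) :
    invConv (powHarmonic 2) n =
      (nestedHarmonic 2 n + powHarmonic 3 n -
        4 * ∑ k ∈ range n, powHarmonic 2 (2 * (k + 1)) / (k + 1 : K) : K) := by
  rw [invConv_eq_sum_reflect, nestedHarmonic, powHarmonic, mul_sum, ← sum_add_distrib,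
    ← sum_sub_distrib]
  refine sum_congr rfl fun k hk => ?_
  rw [powHarmonic_half_reflect 2 (by have := mem_range.1 hk; omega : n - 1 - k + (k + 1) = n),
    powHarmonic_two_half h3, powHarmonic_succ]
  ring

theorem four_mul_nestedHarmonic_two_half (h3 : (3 : K) ≠ 0) :
    (4 * nestedHarmonic 2 n : K) = -powHarmonic 3 n := by
  have hconv := invConv_powHarmonic_two (K := K) (n := n) fun k hk =>
    natCast_add_one_ne_zero_of_lt K (by omega)
  rw [invConv_powHarmonic_two_half h3, sum_powHarmonic_two_even h3, powHarmonic_two_half h3]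
    at hconv
  have h2 := two_ne_zero_of_odd_char K n
  have h8 := eight_ne_zero_of_odd_char K n
  field_simp at hconv
  refine mul_left_cancel₀ (mul_ne_zero (pow_ne_zero 2 h2) h3) ?_
  linear_combination -hconv

theorem sum_alternating_inv_eq_neg_powHarmonic :
    ∑ m ∈ range (2 * n), (-1) ^ m / (m + 1 : K) = -powHarmonic 1 n := by
  have h2 := two_ne_zero_of_odd_char K n
  have hfull := powHarmonic_one_two_mul K n
  rw [powHarmonic, sum_range_two_mul_eq_sum_even_add_odd] at hfull
  rw [← sub_eq_zero, sub_neg_eq_add, ← hfull, powHarmonic, sum_range_two_mul_eq_sum_even_add_odd,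
    ← sum_add_distrib]
  refine sum_congr rfl fun k hk => ?_
  have hk0 : (k + 1 : K) ≠ 0 :=
    natCast_add_one_ne_zero_of_lt K (n := n) (by have := mem_range.1 hk; omega)
  rw [show ((2 * k + 1 : ℕ) + 1 : K) = 2 * (k + 1) by push_cast; ring, pow_succ, pow_mul,
    neg_one_sq, one_pow]
  field_simp
  ring

end HalfRange

section Residue

variable {K : Type*} [Field K]

/-- The denominator of `a : ℚ` is invertible in the field `K`, and `a` maps to `z` in `K`. For
`K = ZMod p` this says that `a` is `p`-integral with residue `z` modulo `p`. The condition on the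
denominator is needed because `Rat.cast` takes junk values without it. -/
def HasResidue (a : ℚ) (z : K) : Prop := (a.den : K) ≠ 0 ∧ (a : K) = z

namespace HasResidue

variable {a b : ℚ} {y z : K}

theorem natCast (n : ℕ) : HasResidue n (n : K) := by simp [HasResidue]

theorem ofNat (n : ℕ) [n.AtLeastTwo] : HasResidue ofNat(n) (ofNat(n) : K) := natCast n

theorem one : HasResidue 1 (1 : K) := by simp [HasResidue]

theorem neg (ha : HasResidue a y) : HasResidue (-a) (-y) := by
  simpa [HasResidue] using ha

theorem add (ha : HasResidue a y) (hb : HasResidue b z) : HasResidue (a + b) (y + z) := by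
  refine ⟨ne_zero_of_dvd_ne_zero ?_ (Nat.cast_dvd_cast (Rat.add_den_dvd a b)), ?_⟩
  · exact Nat.cast_mul (α := K) _ _ ▸ mul_ne_zero ha.1 hb.1
  · rw [Rat.cast_add_of_ne_zero ha.1 hb.1, ha.2, hb.2]

theorem sub (ha : HasResidue a y) (hb : HasResidue b z) : HasResidue (a - b) (y - z) := by
  simpa only [sub_eq_add_neg] using ha.add hb.neg

theorem mul (ha : HasResidue a y) (hb : HasResidue b z) : HasResidue (a * b) (y * z) := by
  refine ⟨ne_zero_of_dvd_ne_zero ?_ (Nat.cast_dvd_cast (Rat.mul_den_dvd a b)), ?_⟩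
  · exact Nat.cast_mul (α := K) _ _ ▸ mul_ne_zero ha.1 hb.1
  · rw [Rat.cast_mul_of_ne_zero ha.1 hb.1, ha.2, hb.2]

theorem pow (ha : HasResidue a y) (n : ℕ) : HasResidue (a ^ n) (y ^ n) := by
  induction n with
  | zero => simpa only [pow_zero] using one
  | succ n ih => simpa only [pow_succ] using ih.mul ha

theorem inv (ha : HasResidue a y) (hy : y ≠ 0) : HasResidue a⁻¹ y⁻¹ := by
  have hnum : (a.num : K) ≠ 0 := fun h => hy <| by rw [← ha.2, Rat.cast_def, h, zero_div]
  refine ⟨?_, by rw [Rat.cast_inv_of_ne_zero hnum, ha.2]⟩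
  have hnum0 : a.num ≠ 0 := fun h => hnum (by rw [h, Int.cast_zero])
  rw [Rat.den_inv, if_neg hnum0]
  rcases a.num.natAbs_eq with h | h <;> rw [h] at hnum <;> simpa using hnum

theorem div (ha : HasResidue a y) (hb : HasResidue b z) (hz : z ≠ 0) :
    HasResidue (a / b) (y / z) := by
  simpa only [div_eq_mul_inv] using ha.mul (hb.inv hz)

theorem sum {ι : Type*} (s : Finset ι) {f : ι → ℚ} {g : ι → K}
    (h : ∀ i ∈ s, HasResidue (f i) (g i)) : HasResidue (∑ i ∈ s, f i) (∑ i ∈ s, g i) := by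
  classical
  induction s using Finset.induction_on with
  | empty => simpa using natCast (K := K) 0
  | insert i s hi ih =>
    rw [sum_insert hi, sum_insert hi]
    exact (h i (mem_insert_self i s)).add (ih fun j hj => h j (mem_insert_of_mem hj))

theorem unique (h : HasResidue a y) (h' : HasResidue a z) : y = z := h.2.symm.trans h'.2

theorem polynomial_eval {f : Polynomial ℚ} (hf : ∀ i, ((f.coeff i).den : K) ≠ 0)
    (ha : HasResidue a z) (hb : HasResidue b z) {y : K} (h : HasResidue (f.eval a) y) :
    HasResidue (f.eval b) y := by
  have key {c : ℚ} (hc : HasResidue c z) : HasResidue (f.eval c)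
      (∑ i ∈ range (f.natDegree + 1), (f.coeff i : K) * z ^ i) := by
    rw [Polynomial.eval_eq_sum_range]
    exact sum _ fun i _ => (mul ⟨hf i, rfl⟩ (hc.pow i))
  exact (key ha).unique h ▸ key hb

theorem ratCongr_one {p : ℕ} [Fact p.Prime] {z : ZMod p} (ha : HasResidue a z)
    (hb : HasResidue b z) : ratCongr p 1 a b := by
  obtain ⟨hden, hcast⟩ := ha.sub hb
  have hnum : (p : ℤ) ∣ (a - b).num := by
    rw [sub_self, Rat.cast_def, div_eq_zero_iff, or_iff_left hden] at hcast
    exact (ZMod.intCast_zmod_eq_zero_iff_dvd _ p).1 hcast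
  obtain ⟨w, hw⟩ := hnum
  refine ⟨w / (a - b).den, ?_, fun hdvd => hden ?_⟩
  · conv_lhs => rw [← Rat.num_div_den (a - b), hw]
    push_cast
    ring
  · rw [ZMod.natCast_eq_zero_iff]
    have hc : (w / (a - b).den : ℚ).den ∣ (a - b).den := by
      exact_mod_cast Rat.den_dvd w (a - b).den
    exact hdvd.trans hc

end HasResidue

theorem hasResidue_harmonic {n : ℕ} (hn : ∀ k < n, (k + 1 : K) ≠ 0) :
    HasResidue (harmonic n) (powHarmonic 1 n : K) := by
  refine HasResidue.sum _ fun k hk => ?_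
  rw [pow_one, Nat.cast_add_one]
  exact ((HasResidue.natCast k).add .one).inv (hn k (mem_range.1 hk))

end Residue

section Bernoulli

variable {K : Type*} [Field K]

theorem bernoulli'_den_ne_zero {n : ℕ} (hn : ∀ k ≤ n, (k + 1 : K) ≠ 0) :
    ((bernoulli' n).den : K) ≠ 0 := by
  induction n using Nat.strong_induction_on with
  | _ n ih =>
    let term (k : ℕ) : K := n.choose k / ((n - k : ℕ) + 1) * (bernoulli' k : ℚ)
    have hterm (k : ℕ) (hk : k ∈ range n) :
        HasResidue (n.choose k / (n - k + 1) * bernoulli' k) (term k) := by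
      have hkn := mem_range.1 hk
      rw [← Nat.cast_sub hkn.le]
      exact ((HasResidue.natCast _).div ((HasResidue.natCast _).add .one)
        (hn (n - k) (Nat.sub_le n k))).mul ⟨ih k hkn fun j hj => hn j (hj.trans hkn.le), rfl⟩
    rw [bernoulli'_def]
    exact (HasResidue.one.sub (HasResidue.sum _ hterm)).1

theorem hasResidue_bernoulli {n : ℕ} (hn : ∀ k ≤ n, (k + 1 : K) ≠ 0) :
    HasResidue (bernoulli n) ((bernoulli n : ℚ) : K) :=
  ⟨((HasResidue.one.neg.pow n).mul ⟨bernoulli'_den_ne_zero hn, rfl⟩).1, rfl⟩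

theorem bernoulli_eval_half (m : ℕ) :
    (Polynomial.bernoulli m).eval (2⁻¹ : ℚ) = (2 / 2 ^ m - 1) * bernoulli m := by
  have hreal : bernoulliFun m 2⁻¹ = (((Polynomial.bernoulli m).eval (2⁻¹ : ℚ) : ℚ) : ℝ) := by
    have := Polynomial.eval₂_at_apply (p := Polynomial.bernoulli m) (algebraMap ℚ ℝ) 2⁻¹
    simpa [bernoulliFun, Polynomial.eval_map] using this
  have h := bernoulliFun_eval_half m
  rw [hreal] at h
  refine Rat.cast_injective (α := ℝ) ?_
  push_cast
  exact h

theorem mul_sum_range_half_pow {n m : ℕ} [CharP K (2 * n + 1)] (hm : m + 1 < 2 * n) :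
    ((m + 1 : K) * ∑ k ∈ range (n + 1), (k : K) ^ m) =
      (2 / 2 ^ (m + 1) - 2) * (bernoulli (m + 1) : ℚ) := by
  have h2 := two_ne_zero_of_odd_char K n
  have hbern {j : ℕ} (hj : j ≤ m + 1) : HasResidue (bernoulli j) ((bernoulli j : ℚ) : K) :=
    hasResidue_bernoulli fun k hk => natCast_add_one_ne_zero_of_lt K (n := n) (by omega)
  have hcoeff (i : ℕ) : (((Polynomial.bernoulli (m + 1)).coeff i).den : K) ≠ 0 := by
    rw [Polynomial.coeff_bernoulli]
    split_ifs
    · exact ((hbern (Nat.sub_le _ _)).mul (.natCast _)).1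
    · simp
  have hhalf : HasResidue 2⁻¹ (2⁻¹ : K) := (HasResidue.ofNat 2).inv h2
  have hcast : HasResidue ((n + 1 : ℕ) : ℚ) (2⁻¹ : K) := by
    convert HasResidue.natCast (K := K) (n + 1)
    push_cast
    field_simp
    linear_combination -two_mul_natCast_eq_neg_one K n
  have heval : HasResidue ((Polynomial.bernoulli (m + 1)).eval ((n + 1 : ℕ) : ℚ))
      ((2 / 2 ^ (m + 1) - 1) * (bernoulli (m + 1) : ℚ) : K) := by
    refine hhalf.polynomial_eval hcoeff hcast ?_
    rw [bernoulli_eval_half]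
    exact (((HasResidue.ofNat 2).div ((HasResidue.ofNat 2).pow _) (pow_ne_zero _ h2)).sub
      .one).mul (hbern le_rfl)
  have hsum : HasResidue ((m + 1 : ℚ) * ∑ k ∈ range (n + 1), (k : ℚ) ^ m)
      ((m + 1 : K) * ∑ k ∈ range (n + 1), (k : K) ^ m) :=
    ((HasResidue.natCast m).add .one).mul (HasResidue.sum _ fun k _ => (HasResidue.natCast k).pow m)
  rw [Polynomial.sum_range_pow_eq_bernoulli_sub] at hsum
  rw [hsum.unique (heval.sub (hbern le_rfl))]
  ring

theorem powHarmonic_half_eq_bernoulli {n r : ℕ} [Fact (2 * n + 1).Prime] (hr : 2 ≤ r)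
    (hrn : r < 2 * n) :
    (r * powHarmonic r n : ZMod (2 * n + 1)) =
      (2 - 2 ^ r) * (bernoulli (2 * n + 1 - r) : ℚ) := by
  have h2 := two_ne_zero_of_odd_char (ZMod (2 * n + 1)) n
  have hfermat {x : ZMod (2 * n + 1)} (hx : x ≠ 0) : x ^ (2 * n - r) = x⁻¹ ^ r := by
    have hcard : x ^ (2 * n) = 1 := ZMod.pow_card_sub_one_eq_one hx
    rw [pow_sub₀ x hx hrn.le, hcard, one_mul, inv_pow]
  have hsum : ∑ k ∈ range (n + 1), (k : ZMod (2 * n + 1)) ^ (2 * n - r) = powHarmonic r n := by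
    rw [sum_range_succ', Nat.cast_zero, zero_pow (by omega), add_zero]
    refine sum_congr rfl fun k hk => ?_
    rw [Nat.cast_add_one]
    exact hfermat (natCast_add_one_ne_zero_of_lt _ (by have := mem_range.1 hk; omega))
  have h := mul_sum_range_half_pow (K := ZMod (2 * n + 1)) (n := n) (m := 2 * n - r) (by omega)
  rw [hsum, pow_succ, hfermat h2, show 2 * n - r + 1 = 2 * n + 1 - r by omega,
    Nat.cast_sub hrn.le, inv_pow, Nat.cast_mul, Nat.cast_ofNat, two_mul_natCast_eq_neg_one] at h
  field_simp at h
  linear_combination -h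

theorem powHarmonic_three_half_eq_bernoulli {n : ℕ} [Fact (2 * n + 1).Prime] (hn : 1 < n) :
    (powHarmonic 3 n : ZMod (2 * n + 1)) = -2 * (bernoulli (2 * n + 1 - 3) : ℚ) := by
  have h3 := three_ne_zero_of_odd_char (ZMod (2 * n + 1)) hn
  have h := powHarmonic_half_eq_bernoulli (n := n) (r := 3) (by omega) (by omega)
  refine mul_left_cancel₀ h3 ?_
  rw [Nat.cast_ofNat] at h
  linear_combination h

end Bernoulli

section FermatQuotient

variable {K : Type*} [Field K]

theorem sum_choose_div_add_one (n : ℕ) :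
    ∑ m ∈ range n, (n.choose m / (m + 1) : ℚ) = 2 * fermatQ (n + 1) := by
  have hterm (m : ℕ) : (n.choose m / (m + 1) : ℚ) = (n + 1).choose (m + 1) / (n + 1) := by
    have h : ((n + 1) * n.choose m : ℚ) = (n + 1).choose (m + 1) * (m + 1) := by
      exact_mod_cast Nat.add_one_mul_choose_eq n m
    field_simp
    linear_combination h
  have htotal : ∑ m ∈ range n, ((n + 1).choose (m + 1) : ℚ) = 2 ^ (n + 1) - 2 := by
    have h := Nat.sum_range_choose (n + 1)
    rw [sum_range_succ, sum_range_succ', Nat.choose_self, Nat.choose_zero_right] at h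
    have h' : ∑ m ∈ range n, ((n + 1).choose (m + 1) : ℚ) + 1 + 1 = 2 ^ (n + 1) := by
      exact_mod_cast h
    linear_combination h'
  rw [sum_congr rfl fun m _ => hterm m, ← sum_div, htotal, fermatQ, Nat.add_sub_cancel]
  push_cast
  ring

theorem choose_pred_char_eq_neg_one_pow {p : ℕ} [Fact p.Prime] [CharP K p] {k : ℕ} (hk : k < p) :
    ((p - 1).choose k : K) = (-1) ^ k := by
  induction k with
  | zero => simp
  | succ k ih =>
    have hzero : (p.choose (k + 1) : K) = 0 :=
      (CharP.cast_eq_zero_iff K p _).2 ((Fact.out : p.Prime).dvd_choose_self k.succ_ne_zero hk)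
    rw [← Nat.sub_add_cancel (by omega : 1 ≤ p), Nat.choose_succ_succ, Nat.cast_add,
      ih (by omega)] at hzero
    rw [pow_succ]
    linear_combination hzero

theorem hasResidue_fermatQ {n : ℕ} [Fact (2 * n + 1).Prime] [CharP K (2 * n + 1)] :
    HasResidue (fermatQ (2 * n + 1)) (-powHarmonic 1 n / 2 : K) := by
  suffices h : HasResidue (2 * fermatQ (2 * n + 1)) (-powHarmonic 1 n : K) by
    simpa using h.div (HasResidue.ofNat 2) (two_ne_zero_of_odd_char K n)
  rw [← sum_choose_div_add_one, ← sum_alternating_inv_eq_neg_powHarmonic]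
  refine HasResidue.sum _ fun m hm => ?_
  have hm' := mem_range.1 hm
  rw [← choose_pred_char_eq_neg_one_pow (p := 2 * n + 1) (by omega : m < 2 * n + 1)]
  exact (HasResidue.natCast _).div ((HasResidue.natCast m).add .one)
    (natCast_add_one_ne_zero_of_lt K hm')

end FermatQuotient

section CongruenceSum

variable {K : Type*} [Field K] {n : ℕ} [CharP K (2 * n + 1)]

theorem invConv_powHarmonic_one_sq_half (h3 : (3 : K) ≠ 0) :
    invConv (fun k => powHarmonic 1 k ^ 2) (n + 1) =
      ((powHarmonic 1 n + 2) ^ 3 - 4 * (powHarmonic 1 n + 2) + powHarmonic 3 n / 4 : K) := by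
  have hn0 : n ≠ 0 := by
    rintro rfl
    simpa using two_mul_natCast_eq_neg_one K 0
  have hinv : (n + 1 : K)⁻¹ = 2 := by
    refine inv_eq_of_mul_eq_one_right ?_
    linear_combination two_mul_natCast_eq_neg_one K n
  have hnested : (nestedHarmonic 2 n : K) = -powHarmonic 3 n / 4 := by
    rw [eq_div_iff (four_ne_zero_of_odd_char K n)]
    linear_combination four_mul_nestedHarmonic_two_half (K := K) (n := n) h3
  rw [invConv_powHarmonic_one_sq fun k hk => natCast_add_one_ne_zero_of_lt K (by omega),
    powHarmonic_succ, powHarmonic_succ, nestedHarmonic_succ, powHarmonic_two_half h3, hnested,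
    hinv]
  ring

theorem hasResidue_sum_harmonic_sq :
    HasResidue
      (∑ k ∈ Icc 1 n, (((2 * n + 1 : ℕ) : ℚ) / 2 - k) * harmonic k ^ 2 /
        ((((2 * n + 1 : ℕ) : ℚ) + 1 - 2 * k) * (((2 * n + 1 : ℕ) : ℚ) + 2 * k)))
      (-invConv (fun k => powHarmonic 1 k ^ 2) (n + 1) / 4 : K) := by
  have h2 := two_ne_zero_of_odd_char K n
  have hp : HasResidue ((2 * n + 1 : ℕ) : ℚ) (0 : K) :=
    CharP.cast_eq_zero K (2 * n + 1) ▸ HasResidue.natCast (2 * n + 1)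
  rw [invConv, range_eq_Ico, sum_eq_sum_Ico_succ_bot n.add_one_pos, powHarmonic_zero_right,
    zero_pow two_ne_zero, zero_div, zero_add, zero_add, Ico_add_one_right_eq_Icc,
    ← sum_neg_distrib, sum_div]
  refine HasResidue.sum _ fun k hk => ?_
  obtain ⟨hk1, hkn⟩ := mem_Icc.1 hk
  have hk0 : (k : K) ≠ 0 := by
    have := natCast_add_one_ne_zero_of_lt K (n := n) (k := k - 1) (by omega)
    rwa [← Nat.cast_add_one, Nat.sub_add_cancel hk1] at this
  have hnk : ((n + 1 : ℕ) - k : K) ≠ 0 := by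
    have := natCast_add_one_ne_zero_of_lt K (n := n) (k := n - k) (by omega)
    rwa [← Nat.cast_add_one, ← Nat.sub_add_comm hkn, Nat.cast_sub (by omega)] at this
  have hodd : (0 + 1 - 2 * k : K) = 2 * ((n + 1 : ℕ) - k) := by
    push_cast
    linear_combination -two_mul_natCast_eq_neg_one K n
  have hharm := hasResidue_harmonic (n := k) fun j _ =>
    natCast_add_one_ne_zero_of_lt K (n := n) (by omega : j < 2 * n)
  have htwo : HasResidue 2 (2 : K) := .ofNat 2
  have hk := HasResidue.natCast (K := K) k
  have hden : (0 + 1 - 2 * k : K) * (0 + 2 * k) ≠ 0 := by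
    rw [hodd, zero_add]
    exact mul_ne_zero (mul_ne_zero h2 hnk) (mul_ne_zero h2 hk0)
  convert (((hp.div htwo h2).sub hk).mul (hharm.pow 2)).div
    (((hp.add .one).sub (htwo.mul hk)).mul (hp.add (htwo.mul hk))) hden using 1
  rw [hodd, show (4 : K) = 2 * 2 by norm_num]
  field_simp
  ring

end CongruenceSum

theorem sum_Hk_sq_congr (p : ℕ) (hp : p.Prime) (hp3 : 3 < p) :
    ratCongr p 1
      (∑ k ∈ Finset.Icc 1 ((p - 1) / 2),
        ((p : ℚ) / 2 - k) * harmonic k ^ 2 / (((p : ℚ) + 1 - 2 * k) * ((p : ℚ) + 2 * k)))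
      (4 * fermatQ p - 6 * fermatQ p ^ 2 + 2 * fermatQ p ^ 3 + (1 / 8) * bernoulli (p - 3)) := by
  have : Fact p.Prime := ⟨hp⟩
  obtain ⟨n, rfl⟩ := hp.odd_of_ne_two (by omega)
  have h3 := three_ne_zero_of_odd_char (ZMod (2 * n + 1)) (n := n) (by omega)
  have h2 := two_ne_zero_of_odd_char (ZMod (2 * n + 1)) n
  have h4 := four_ne_zero_of_odd_char (ZMod (2 * n + 1)) n
  have h8 := eight_ne_zero_of_odd_char (ZMod (2 * n + 1)) n
  have hq := hasResidue_fermatQ (K := ZMod (2 * n + 1)) (n := n)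
  have hB := hasResidue_bernoulli (K := ZMod (2 * n + 1)) (n := 2 * n + 1 - 3) fun k hk =>
    natCast_add_one_ne_zero_of_lt _ (by omega)
  have hsum := hasResidue_sum_harmonic_sq (K := ZMod (2 * n + 1)) (n := n)
  rw [invConv_powHarmonic_one_sq_half h3, powHarmonic_three_half_eq_bernoulli (by omega)] at hsum
  rw [show (2 * n + 1 - 1) / 2 = n by omega]
  refine hsum.ratCongr_one ?_
  convert ((((HasResidue.ofNat 4).mul hq).sub ((HasResidue.ofNat 6).mul (hq.pow 2))).add
    ((HasResidue.ofNat 2).mul (hq.pow 3))).add ((HasResidue.one.div (.ofNat 8) h8).mul hB) using 1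
  field_simp
  ring
end

section
/- Let p > 3 be a prime. Then ∑_{k=1}^{(p-1)/2} (p/2 - k)·H_k·H_{2k}/((p+1-2k)(p+2k)) ≡ 2·q_p(2) - (5/2)·q_p(2)^2 + (1/2)·q_p(2)^3 + (5/16)·B_{p-3} modulo p (as rational numbers). -/
/-!
Everything is reduced to alternating harmonic sums modulo `p`. The factor
`(p / 2 - k) / ((p + 1 - 2 k) (p + 2 k))` becomes `1 / (2 (2 k - 1))`, and since
`H_k = ∑_{j ≤ 2 k} (1 + (-1) ^ j) / j`, selecting odd indices by `(1 - (-1) ^ i) / 2` turns the sum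
into a combination of alternating double and triple sums up to `p - 1`.

Modulo `p` these satisfy three families of relations: reversal (`i ↦ p - i`), stuffle products, and
shuffle relations, in which partial fractions of `1 / (i j)` with `i + j = m` are combined with
reversal. Up to weight three they express every sum needed through
`A = ∑_{i < p} (-1) ^ i / i` and `Z = ∑_{p > i > j > 0} 1 / (i ^ 2 j)`. Finally
`A ≡ -2 q_p(2)`, because `p⁻¹ (p.choose i) ≡ -(-1) ^ i / i`, and `Z ≡ B_{p-3}` by Faulhaber's
formula applied to `∑_{j < i} j ^ (p - 2)`.
-/

open Finset

section NestedSum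

variable {ι R : Type*}

/-- The nested sum `∑ f s₁ i₁ * ⋯ * f s_d i_d` over `N > i₁ > ⋯ > i_d ≥ 0`. The outermost index,
the largest one, belongs to the head of the word. -/
def nestedSum [Semiring R] (f : ι → ℕ → R) : List ι → ℕ → R
  | [], _ => 1
  | s :: w, N => ∑ i ∈ range N, f s i * nestedSum f w i

section Semiring

variable [Semiring R] (f : ι → ℕ → R)

theorem nestedSum_nil (N : ℕ) : nestedSum f [] N = 1 := rfl

theorem nestedSum_cons (s : ι) (w : List ι) (N : ℕ) :
    nestedSum f (s :: w) N = ∑ i ∈ range N, f s i * nestedSum f w i := rfl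

theorem nestedSum_singleton (s : ι) (N : ℕ) : nestedSum f [s] N = ∑ i ∈ range N, f s i := by
  simp [nestedSum]

theorem nestedSum_cons_zero (s : ι) (w : List ι) : nestedSum f (s :: w) 0 = 0 := by
  simp [nestedSum]

theorem nestedSum_cons_succ (s : ι) (w : List ι) (N : ℕ) :
    nestedSum f (s :: w) (N + 1) = nestedSum f (s :: w) N + f s N * nestedSum f w N := by
  simp [nestedSum, sum_range_succ]

end Semiring

section CommSemiring

variable [CommSemiring R]

theorem nestedSum_concat_succ (f : ι → ℕ → R) (w : List ι) (s : ι) (N : ℕ) :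
    nestedSum f (w ++ [s]) (N + 1) =
      nestedSum (fun t i ↦ f t (i + 1)) (w ++ [s]) N +
        f s 0 * nestedSum (fun t i ↦ f t (i + 1)) w N := by
  induction w generalizing N with
  | nil => simp [nestedSum, sum_range_succ']
  | cons t w ih =>
    have h0 : nestedSum f (w ++ [s]) 0 = 0 := by cases w <;> exact nestedSum_cons_zero f _ _
    simp only [List.cons_append, nestedSum_cons, sum_range_succ' _ N, h0, mul_zero, add_zero, ih,
      mul_add, sum_add_distrib, mul_sum, mul_left_comm]

theorem nestedSum_reverse {f g : ι → ℕ → R} {N : ℕ}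
    (hfg : ∀ s i j, i + j + 1 = N → f s i = g s j) (w : List ι) :
    nestedSum f w.reverse N = nestedSum g w N := by
  induction N generalizing f w with
  | zero =>
    cases w with
    | nil => rfl
    | cons s w =>
      rw [nestedSum_cons_zero]
      rcases h : (s :: w).reverse with - | ⟨t, v⟩
      · simp at h
      · exact nestedSum_cons_zero f t v
  | succ N ih =>
    cases w with
    | nil => rfl
    | cons s w =>
      have hshift (t : ι) (i j : ℕ) (hij : i + j + 1 = N) : f t (i + 1) = g t j :=
        hfg t (i + 1) j (by omega)
      rw [List.reverse_cons, nestedSum_concat_succ, ← List.reverse_cons, ih hshift, ih hshift,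
        nestedSum_cons_succ, hfg s 0 N (by omega)]

theorem nestedSum_mul_left (c : ι → R) (f : ι → ℕ → R) (w : List ι) (N : ℕ) :
    nestedSum (fun s i ↦ c s * f s i) w N = (w.map c).prod * nestedSum f w N := by
  induction w generalizing N with
  | nil => simp [nestedSum]
  | cons s w ih =>
    simp only [nestedSum_cons, ih, List.map_cons, List.prod_cons, mul_sum]
    exact sum_congr rfl fun i _ ↦ by ring

end CommSemiring

section Stuffle

variable [CommRing R] {f : ι → ℕ → R} {s t r st sr : ι}

theorem nestedSum_singleton_mul_singleton (hst : ∀ i, f s i * f t i = f st i) (N : ℕ) :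
    nestedSum f [s] N * nestedSum f [t] N =
      nestedSum f [s, t] N + nestedSum f [t, s] N + nestedSum f [st] N := by
  induction N with
  | zero => simp [nestedSum_cons_zero]
  | succ N ih =>
    simp only [nestedSum_cons_succ, nestedSum_nil]
    linear_combination ih + hst N

theorem nestedSum_singleton_mul_pair (hst : ∀ i, f s i * f t i = f st i)
    (hsr : ∀ i, f s i * f r i = f sr i) (N : ℕ) :
    nestedSum f [s] N * nestedSum f [t, r] N =
      nestedSum f [s, t, r] N + nestedSum f [t, s, r] N + nestedSum f [t, r, s] N +
        nestedSum f [st, r] N + nestedSum f [t, sr] N := by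
  induction N with
  | zero => simp [nestedSum_cons_zero]
  | succ N ih =>
    simp only [nestedSum_cons_succ, nestedSum_nil]
    linear_combination
      ih + f t N * nestedSum_singleton_mul_singleton hsr N + nestedSum f [r] N * hst N

end Stuffle

end NestedSum

section AltHarm

variable {p : ℕ}

/-- The summand `± 1 / (i + 1) ^ |s|` of an alternating harmonic sum modulo `p`, with sign
`(sign s) ^ (i + 1)`: as usual for alternating multiple harmonic sums, a negative exponent stands
for an alternating sign. The shift by one keeps the index `i = 0` away from `1 / 0`. -/
def altInvPow (p : ℕ) (s : ℤ) (i : ℕ) : ZMod p :=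
  (s.sign : ZMod p) ^ (i + 1) * ((i + 1 : ℕ) : ZMod p)⁻¹ ^ s.natAbs

/-- The alternating multiple harmonic sum
`∑ (± 1 / i₁ ^ |s₁|) * ⋯ * (± 1 / i_d ^ |s_d|)` over `N ≥ i₁ > ⋯ > i_d ≥ 1`, modulo `p`. -/
abbrev altHarm (p : ℕ) : List ℤ → ℕ → ZMod p := nestedSum (altInvPow p)

/-- The sign by which the substitution `i ↦ p - i`, which reverses the word `w`, acts on the
alternating harmonic sum of `w`. -/
def reverseSign (w : List ℤ) : ℤ := (w.map fun s ↦ (-1) ^ s.natAbs * s.sign).prod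

/-- The exponent `s ⊕ t` of a product of two summands of alternating harmonic sums: signs
multiply, absolute values add. -/
def mergeExponents (s t : ℤ) : ℤ := s.sign * t.sign * (s.natAbs + t.natAbs)

theorem altInvPow_mul (s t : ℤ) (i : ℕ) :
    altInvPow p s i * altInvPow p t i = altInvPow p (mergeExponents s t) i := by
  rcases eq_or_ne s 0 with rfl | hs
  · simp [altInvPow, mergeExponents]
  rcases eq_or_ne t 0 with rfl | ht
  · simp [altInvPow, mergeExponents]
  have hpos : 0 < (s.natAbs : ℤ) + t.natAbs := by positivity
  have hsign : (mergeExponents s t).sign = s.sign * t.sign := by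
    rw [mergeExponents, Int.sign_mul, Int.sign_eq_one_of_pos hpos, mul_one, Int.sign_mul,
      Int.sign_sign, Int.sign_sign]
  have habs : (mergeExponents s t).natAbs = s.natAbs + t.natAbs := by
    rw [mergeExponents, Int.natAbs_mul, Int.natAbs_mul, Int.natAbs_sign_of_ne_zero hs,
      Int.natAbs_sign_of_ne_zero ht]
    omega
  simp only [altInvPow, hsign, habs]
  push_cast
  ring

theorem altInvPow_one (i : ℕ) : altInvPow p 1 i = ((i + 1 : ℕ) : ZMod p)⁻¹ := by
  simp [altInvPow]

theorem altInvPow_units (ε : ℤˣ) (i : ℕ) :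
    altInvPow p ε i = ((ε : ℤ) : ZMod p) ^ (i + 1) * ((i + 1 : ℕ) : ZMod p)⁻¹ := by
  rcases Int.units_eq_one_or ε with rfl | rfl <;> simp [altInvPow]

variable [Fact p.Prime]

theorem natCast_ne_zero_of_lt {m : ℕ} (h0 : 0 < m) (hm : m < p) : (m : ZMod p) ≠ 0 := by
  rw [Ne, ZMod.natCast_eq_zero_iff]
  exact Nat.not_dvd_of_pos_of_lt h0 hm

theorem ofNat_ne_zero_of_lt (n : ℕ) [n.AtLeastTwo] (hn : n < p) :
    (OfNat.ofNat n : ZMod p) ≠ 0 :=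
  mod_cast natCast_ne_zero_of_lt (Nat.pos_of_neZero n) hn

theorem two_ne_zero_of_ne_two (hp2 : p ≠ 2) : (2 : ZMod p) ≠ 0 :=
  Ring.two_ne_zero (by rwa [ZMod.ringChar_zmod_n])

theorem altInvPow_reflect (hp2 : p ≠ 2) (s : ℤ) {i j : ℕ} (hij : i + j + 1 = p - 1) :
    altInvPow p s i = (-1) ^ s.natAbs * s.sign * altInvPow p s j := by
  obtain ⟨n, hn⟩ := (Fact.out : p.Prime).odd_of_ne_two hp2
  have hi : ((i + 1 : ℕ) : ZMod p) = -((j + 1 : ℕ) : ZMod p) := by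
    rw [eq_neg_iff_add_eq_zero, ← Nat.cast_add, show i + 1 + (j + 1) = p by omega,
      ZMod.natCast_self]
  have hsign : (s.sign : ZMod p) ^ (i + 1) = s.sign * (s.sign : ZMod p) ^ (j + 1) := by
    rcases s.sign_trichotomy with h | h | h
    · simp [h]
    · simp [h]
    · rw [h, Int.cast_neg, Int.cast_one, ← pow_succ']
      exact neg_one_pow_congr (by grind)
  rw [altInvPow, altInvPow, hi, hsign, inv_neg, neg_pow _ s.natAbs]
  ring

theorem altHarm_reverse (hp2 : p ≠ 2) (w : List ℤ) {c : ℤ} (hc : reverseSign w = c) :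
    altHarm p w.reverse (p - 1) = c * altHarm p w (p - 1) := by
  rw [← hc, reverseSign, Int.cast_list_prod, List.map_map, altHarm, ← nestedSum_mul_left]
  refine nestedSum_reverse (fun s i j hij ↦ ?_) w
  simpa using altInvPow_reflect hp2 s hij

theorem altHarm_eq_zero_of_palindrome (hp2 : p ≠ 2) {w : List ℤ} (hw : w.reverse = w)
    (hsign : reverseSign w = -1) : altHarm p w (p - 1) = 0 := by
  have h2 : (2 : ZMod p) ≠ 0 := two_ne_zero_of_ne_two hp2
  have h := altHarm_reverse hp2 w hsign
  rw [hw] at h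
  refine (mul_eq_zero.1 ?_).resolve_left h2
  push_cast at h
  linear_combination h

/-- Partial fractions: `1 / (x y) = (1 / (x + y)) (1 / y + 1 / x)` for `x = i + 1`, `y = j + 1`. -/
theorem altInvPow_units_mul_altInvPow_units (ε δ : ℤˣ) {i j m : ℕ} (hij : i + j + 1 = m)
    (hm : m + 1 < p) :
    altInvPow p ε i * altInvPow p δ j =
      altInvPow p ε m * altInvPow p ↑(ε * δ) j + altInvPow p δ m * altInvPow p ↑(ε * δ) i := by
  subst hij
  have hi := natCast_ne_zero_of_lt (p := p) i.succ_pos (by omega)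
  have hj := natCast_ne_zero_of_lt (p := p) j.succ_pos (by omega)
  have hm := natCast_ne_zero_of_lt (p := p) (i + j + 1).succ_pos hm
  have hpf : ((i + 1 : ℕ) : ZMod p)⁻¹ * ((j + 1 : ℕ) : ZMod p)⁻¹ =
      ((i + j + 1 + 1 : ℕ) : ZMod p)⁻¹ *
        (((j + 1 : ℕ) : ZMod p)⁻¹ + ((i + 1 : ℕ) : ZMod p)⁻¹) := by
    field_simp
    push_cast
    ring
  have hsq (η : ℤˣ) (k : ℕ) : ((η : ℤ) : ZMod p) ^ k * ((η : ℤ) : ZMod p) ^ k = 1 := by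
    rcases Int.units_eq_one_or η with rfl | rfl <;> simp [← mul_pow]
  simp only [altInvPow_units]
  push_cast
  push_cast at hpf
  linear_combination ((ε : ℤ) : ZMod p) ^ (i + 1) * ((δ : ℤ) : ZMod p) ^ (j + 1) *
    (hpf - (i + j + 1 + 1 : ZMod p)⁻¹ *
      ((j + 1 : ZMod p)⁻¹ * hsq ε (j + 1) + (i + 1 : ZMod p)⁻¹ * hsq δ (i + 1)))

theorem sum_altInvPow_mul_altInvPow_sub (ε δ : ℤˣ) (U : ℕ → ZMod p) {m : ℕ} (hm : m + 1 < p) :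
    ∑ i ∈ range m, altInvPow p ε i * (altInvPow p δ (m - 1 - i) * U (m - 1 - i)) =
      altInvPow p ε m * ∑ j ∈ range m, altInvPow p ↑(ε * δ) j * U j +
        altInvPow p δ m * ∑ i ∈ range m, altInvPow p ↑(ε * δ) i * U (m - 1 - i) := by
  rw [← sum_range_reflect (fun j ↦ altInvPow p ↑(ε * δ) j * U j), mul_sum, mul_sum,
    ← sum_add_distrib]
  refine sum_congr rfl fun i hi ↦ ?_
  have hij : i + (m - 1 - i) + 1 = m := by grind
  linear_combination U (m - 1 - i) * altInvPow_units_mul_altInvPow_units ε δ hij hm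

theorem sum_altInvPow_mul_sum_range_sub (ε δ : ℤˣ) (U : ℕ → ZMod p) {N : ℕ} (hN : N < p) :
    ∑ i ∈ range N, altInvPow p ε i * ∑ j ∈ range (N - 1 - i), altInvPow p δ j * U j =
      ∑ m ∈ range N, altInvPow p ε m * ∑ j ∈ range m, altInvPow p ↑(ε * δ) j * U j +
      ∑ m ∈ range N, altInvPow p δ m *
        ∑ i ∈ range m, altInvPow p ↑(ε * δ) i * U (m - 1 - i) := by
  induction N with
  | zero => simp
  | succ N ih =>
    have hstep : ∀ i ∈ range N,
        altInvPow p ε i * ∑ j ∈ range (N - i), altInvPow p δ j * U j =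
          altInvPow p ε i * ∑ j ∈ range (N - 1 - i), altInvPow p δ j * U j +
            altInvPow p ε i * (altInvPow p δ (N - 1 - i) * U (N - 1 - i)) := by
      intro i hi
      rw [← mul_add, ← sum_range_succ, show N - i = N - 1 - i + 1 by grind]
    simp only [sum_range_succ _ N, Nat.add_sub_cancel]
    rw [sum_congr rfl hstep, sum_add_distrib, ih (by omega),
      sum_altInvPow_mul_altInvPow_sub ε δ U hN]
    simp only [Nat.sub_self, range_zero, sum_empty]
    ring

theorem sum_altInvPow_mul_comp_sub (hp2 : p ≠ 2) (ε : ℤˣ) (X : ℕ → ZMod p) :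
    ∑ i ∈ range (p - 1), altInvPow p ε i * X (p - 1 - 1 - i) =
      -((ε : ℤ) : ZMod p) * ∑ i ∈ range (p - 1), altInvPow p ε i * X i := by
  rw [← sum_range_reflect (fun i ↦ altInvPow p ε i * X i), mul_sum]
  refine sum_congr rfl fun i hi ↦ ?_
  have hε : (-1) ^ (ε : ℤ).natAbs * ((ε : ℤ).sign : ZMod p) = -((ε : ℤ) : ZMod p) := by
    rcases Int.units_eq_one_or ε with rfl | rfl <;> simp
  rw [altInvPow_reflect hp2 ε (j := p - 1 - 1 - i) (by grind), hε, mul_assoc]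

theorem sum_altInvPow_mul_altHarm_sub (ε δ : ℤˣ) {N : ℕ} (hN : N < p) :
    ∑ i ∈ range N, altInvPow p ε i * altHarm p [(δ : ℤ)] (N - 1 - i) =
      altHarm p [(ε : ℤ), ↑(ε * δ)] N + altHarm p [(δ : ℤ), ↑(ε * δ)] N :=
  sum_altInvPow_mul_sum_range_sub ε δ (fun _ ↦ 1) hN

theorem altHarm_shuffle_one_one (hp2 : p ≠ 2) (ε δ : ℤˣ) :
    -((ε : ℤ) : ZMod p) * altHarm p [(ε : ℤ), (δ : ℤ)] (p - 1) =
      altHarm p [(ε : ℤ), ↑(ε * δ)] (p - 1) + altHarm p [(δ : ℤ), ↑(ε * δ)] (p - 1) := by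
  have hp := (Fact.out : p.Prime).one_lt
  rw [← sum_altInvPow_mul_altHarm_sub ε δ (by omega), sum_altInvPow_mul_comp_sub hp2 ε]
  rfl

theorem altHarm_shuffle_one_two (hp2 : p ≠ 2) (ε δ γ : ℤˣ) :
    -((ε : ℤ) : ZMod p) * altHarm p [(ε : ℤ), (δ : ℤ), (γ : ℤ)] (p - 1) =
      altHarm p [(ε : ℤ), ↑(ε * δ), (γ : ℤ)] (p - 1) +
        altHarm p [(δ : ℤ), ↑(ε * δ), ↑(ε * δ * γ)] (p - 1) +
        altHarm p [(δ : ℤ), (γ : ℤ), ↑(ε * δ * γ)] (p - 1) := by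
  have hp := (Fact.out : p.Prime).one_lt
  have h := sum_altInvPow_mul_sum_range_sub ε δ (altHarm p [(γ : ℤ)])
    (show p - 1 < p by omega)
  have hinner : ∀ m ∈ range (p - 1), altInvPow p δ m *
      ∑ i ∈ range m, altInvPow p ↑(ε * δ) i * altHarm p [(γ : ℤ)] (m - 1 - i) =
      altInvPow p δ m * altHarm p [↑(ε * δ), ↑(ε * δ * γ)] m +
        altInvPow p δ m * altHarm p [(γ : ℤ), ↑(ε * δ * γ)] m := fun m hm ↦ by
    rw [sum_altInvPow_mul_altHarm_sub _ _ (by grind), mul_add]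
  rw [sum_congr rfl hinner, sum_add_distrib, ← add_assoc,
    sum_altInvPow_mul_comp_sub hp2 ε
      (fun n ↦ ∑ j ∈ range n, altInvPow p δ j * altHarm p [(γ : ℤ)] j)] at h
  exact h

theorem altHarm_shuffle_square (hp2 : p ≠ 2) (ε δ : ℤˣ) :
    -((ε : ℤ) : ZMod p) * altHarm p [(ε : ℤ), 2 * (δ : ℤ)] (p - 1) =
      altHarm p [(ε : ℤ), 2 * ↑(ε * δ)] (p - 1) + altHarm p [2 * (ε : ℤ), ↑(ε * δ)] (p - 1) +
        altHarm p [2 * (δ : ℤ), ↑(ε * δ)] (p - 1) := by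
  have hp := (Fact.out : p.Prime).one_lt
  have hsq (η : ℤˣ) (i : ℕ) : altInvPow p η i * altInvPow p 1 i = altInvPow p (2 * η) i * 1 := by
    rcases Int.units_eq_one_or η with rfl | rfl <;> simp [altInvPow_mul, mergeExponents]
  have hinner : ∀ m ∈ range (p - 1), altInvPow p δ m *
      ∑ i ∈ range m, altInvPow p ↑(ε * δ) i * altInvPow p 1 (m - 1 - i) =
      altInvPow p (2 * ε) m * altHarm p [↑(ε * δ)] m +
        altInvPow p (2 * δ) m * altHarm p [↑(ε * δ)] m := fun m hm ↦ by
    have h := sum_altInvPow_mul_altInvPow_sub (p := p) (ε * δ) 1 (fun _ ↦ 1) (m := m) (by grind)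
    simp only [mul_one, Units.val_one, ← nestedSum_singleton] at h
    have hmul : altInvPow p δ m * altInvPow p ↑(ε * δ) m = altInvPow p (2 * ε) m := by
      rcases Int.units_eq_one_or ε with rfl | rfl <;>
        rcases Int.units_eq_one_or δ with rfl | rfl <;> simp [altInvPow_mul, mergeExponents]
    rw [h, mul_add, ← mul_assoc, ← mul_assoc, hmul, hsq, mul_one]
  have h := sum_altInvPow_mul_sum_range_sub ε δ (altInvPow p 1) (show p - 1 < p by omega)
  rw [sum_congr rfl hinner, sum_add_distrib, ← add_assoc,
    sum_altInvPow_mul_comp_sub hp2 ε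
      (fun n ↦ ∑ j ∈ range n, altInvPow p δ j * altInvPow p 1 j)] at h
  simp only [hsq] at h
  exact h

end AltHarm

section Relations

variable {p : ℕ} [Fact p.Prime]

local notation "Z" w:max => altHarm p w (p - 1)

theorem altHarm_one (hp2 : p ≠ 2) : Z [1] = 0 :=
  altHarm_eq_zero_of_palindrome hp2 rfl rfl

theorem altHarm_neg_two (hp2 : p ≠ 2) : Z [-2] = 0 :=
  altHarm_eq_zero_of_palindrome hp2 rfl rfl

theorem altHarm_one_one_one (hp2 : p ≠ 2) : Z [1, 1, 1] = 0 :=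
  altHarm_eq_zero_of_palindrome hp2 rfl rfl

theorem altHarm_neg_one_one_neg_one (hp2 : p ≠ 2) : Z [-1, 1, -1] = 0 :=
  altHarm_eq_zero_of_palindrome hp2 rfl rfl

theorem altHarm_one_one (hp3 : 3 < p) : Z [1, 1] = 0 := by
  have h : -Z [1, 1] = Z [1, 1] + Z [1, 1] := by
    simpa using altHarm_shuffle_one_one (p := p) (by omega) 1 1
  refine (mul_eq_zero.1 ?_).resolve_left (ofNat_ne_zero_of_lt (p := p) 3 hp3)
  linear_combination -h

theorem altHarm_two (hp3 : 3 < p) : Z [2] = 0 := by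
  have h : Z [1] * Z [1] = Z [1, 1] + Z [1, 1] + Z [2] :=
    nestedSum_singleton_mul_singleton (altInvPow_mul 1 1) _
  rw [altHarm_one (by omega), altHarm_one_one hp3] at h
  linear_combination -h

theorem two_mul_altHarm_neg_one_neg_one (hp3 : 3 < p) : 2 * Z [-1, -1] = Z [-1] ^ 2 := by
  have h : Z [-1] * Z [-1] = Z [-1, -1] + Z [-1, -1] + Z [2] :=
    nestedSum_singleton_mul_singleton (altInvPow_mul (-1) (-1)) _
  rw [altHarm_two hp3] at h
  linear_combination -h

theorem four_mul_altHarm_one_neg_one (hp3 : 3 < p) : 4 * Z [1, -1] = -Z [-1] ^ 2 := by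
  have h : -Z [1, -1] = Z [1, -1] + Z [-1, -1] := by
    simpa using altHarm_shuffle_one_one (p := p) (by omega) 1 (-1)
  linear_combination -2 * h - two_mul_altHarm_neg_one_neg_one hp3

theorem four_mul_altHarm_neg_one_one (hp3 : 3 < p) : 4 * Z [-1, 1] = Z [-1] ^ 2 := by
  have h : Z [-1, 1] = -Z [1, -1] := by
    simpa using altHarm_reverse (p := p) (by omega) [1, -1] (c := -1) rfl
  linear_combination 4 * h - four_mul_altHarm_one_neg_one hp3

theorem altHarm_one_two (hp2 : p ≠ 2) : Z [1, 2] = -Z [2, 1] := by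
  simpa using altHarm_reverse hp2 [2, 1] (c := -1) rfl

theorem altHarm_neg_one_two (hp2 : p ≠ 2) : Z [-1, 2] = Z [2, -1] := by
  simpa using altHarm_reverse hp2 [2, -1] (c := 1) rfl

theorem altHarm_one_neg_two (hp2 : p ≠ 2) : Z [1, -2] = Z [-2, 1] := by
  simpa using altHarm_reverse hp2 [-2, 1] (c := 1) rfl

theorem altHarm_neg_one_neg_two (hp2 : p ≠ 2) : Z [-1, -2] = -Z [-2, -1] := by
  simpa using altHarm_reverse hp2 [-2, -1] (c := -1) rfl

theorem altHarm_one_one_neg_one (hp2 : p ≠ 2) : Z [1, 1, -1] = Z [-1, 1, 1] := by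
  simpa using altHarm_reverse hp2 [-1, 1, 1] (c := 1) rfl

theorem altHarm_neg_two_one (hp3 : 3 < p) : Z [-2, 1] = Z [2, -1] := by
  have h1 : Z [1] * Z [-2] = Z [1, -2] + Z [-2, 1] + Z [-3] :=
    nestedSum_singleton_mul_singleton (altInvPow_mul 1 (-2)) _
  have h2 : Z [-1] * Z [2] = Z [-1, 2] + Z [2, -1] + Z [-3] :=
    nestedSum_singleton_mul_singleton (altInvPow_mul (-1) 2) _
  rw [altHarm_one (by omega), altHarm_one_neg_two (by omega)] at h1
  rw [altHarm_two hp3, altHarm_neg_one_two (by omega)] at h2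
  refine mul_left_cancel₀ (two_ne_zero_of_ne_two (p := p) (by omega)) ?_
  linear_combination h2 - h1

theorem altHarm_neg_two_neg_one (hp3 : 3 < p) : Z [-2, -1] = -3 * Z [2, -1] := by
  have h : -Z [1, -2] = Z [1, -2] + Z [2, -1] + Z [-2, -1] := by
    simpa using altHarm_shuffle_square (p := p) (by omega) 1 (-1)
  rw [altHarm_one_neg_two (by omega), altHarm_neg_two_one hp3] at h
  linear_combination -h

theorem altHarm_one_neg_one_one (hp3 : 3 < p) :
    Z [1, -1, 1] = -2 * Z [-1, 1, 1] - 2 * Z [2, -1] := by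
  have h : Z [1] * Z [1, -1] =
      Z [1, 1, -1] + Z [1, 1, -1] + Z [1, -1, 1] + Z [2, -1] + Z [1, -2] :=
    nestedSum_singleton_mul_pair (altInvPow_mul 1 1) (altInvPow_mul 1 (-1)) _
  rw [altHarm_one (by omega), altHarm_one_one_neg_one (by omega), altHarm_one_neg_two (by omega),
    altHarm_neg_two_one hp3] at h
  linear_combination -h

theorem altHarm_neg_one_neg_one_one (hp3 : 3 < p) : Z [-1, -1, 1] = 3 * Z [-1, 1, 1] := by
  have hrev : Z [-1, -1, 1] = -Z [1, -1, -1] := by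
    simpa using altHarm_reverse (p := p) (by omega) [1, -1, -1] (c := -1) rfl
  have h : -Z [1, 1, -1] = Z [1, 1, -1] + Z [1, 1, -1] + Z [1, -1, -1] := by
    simpa using altHarm_shuffle_one_two (p := p) (by omega) 1 1 (-1)
  rw [altHarm_one_one_neg_one (by omega)] at h
  linear_combination hrev + h

theorem mul_altHarm_neg_one_one_one (hp3 : 3 < p) :
    24 * Z [-1, 1, 1] = Z [-1] ^ 3 - 28 * Z [2, -1] := by
  have hst : Z [-1] * Z [-1, -1] =
      Z [-1, -1, -1] + Z [-1, -1, -1] + Z [-1, -1, -1] + Z [2, -1] + Z [-1, 2] :=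
    nestedSum_singleton_mul_pair (altInvPow_mul (-1) (-1)) (altInvPow_mul (-1) (-1)) _
  have hsh : -Z [1, -1, 1] = Z [1, -1, 1] + Z [-1, -1, -1] + Z [-1, 1, -1] := by
    simpa using altHarm_shuffle_one_two (p := p) (by omega) 1 (-1) 1
  rw [altHarm_neg_one_two (by omega)] at hst
  rw [altHarm_neg_one_one_neg_one (by omega), altHarm_one_neg_one_one hp3] at hsh
  linear_combination Z [-1] * two_mul_altHarm_neg_one_neg_one hp3 - 2 * hst + 6 * hsh

theorem four_mul_altHarm_two_neg_one (hp3 : 3 < p) : 4 * Z [2, -1] = Z [2, 1] := by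
  have h : Z [-1] * Z [-1, 1] =
      Z [-1, -1, 1] + Z [-1, -1, 1] + Z [-1, 1, -1] + Z [2, 1] + Z [-1, -2] :=
    nestedSum_singleton_mul_pair (altInvPow_mul (-1) (-1)) (altInvPow_mul (-1) 1) _
  rw [altHarm_neg_one_neg_one_one hp3, altHarm_neg_one_one_neg_one (by omega),
    altHarm_neg_one_neg_two (by omega), altHarm_neg_two_neg_one hp3] at h
  refine mul_left_cancel₀ (pow_ne_zero 2 (two_ne_zero_of_ne_two (p := p) (by omega))) ?_
  linear_combination 4 * h - Z [-1] * four_mul_altHarm_neg_one_one hp3 +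
    mul_altHarm_neg_one_one_one hp3

end Relations

section ParitySplitting

variable {p : ℕ} [Fact p.Prime]

theorem altInvPow_neg_one_two_mul (k : ℕ) : altInvPow p (-1) (2 * k) = -altInvPow p 1 (2 * k) := by
  simp [altInvPow, pow_succ, pow_mul]

theorem altInvPow_neg_one_two_mul_add_one (k : ℕ) :
    altInvPow p (-1) (2 * k + 1) = altInvPow p 1 (2 * k + 1) := by
  simp [altInvPow, pow_succ, pow_mul]

theorem two_mul_altInvPow_one_two_mul_add_one (hp2 : p ≠ 2) (k : ℕ) :
    2 * altInvPow p 1 (2 * k + 1) = altInvPow p 1 k := by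
  have h2 : (2 : ZMod p) ≠ 0 := two_ne_zero_of_ne_two hp2
  rw [altInvPow_one, altInvPow_one, show 2 * k + 1 + 1 = 2 * (k + 1) by ring, Nat.cast_mul,
    mul_inv, Nat.cast_ofNat, mul_inv_cancel_left₀ h2]

theorem altHarm_one_eq_add (hp2 : p ≠ 2) (k : ℕ) :
    altHarm p [1] k = altHarm p [1] (2 * k) + altHarm p [-1] (2 * k) := by
  induction k with
  | zero => simp [nestedSum_cons_zero]
  | succ k ih =>
    simp only [mul_add_one, nestedSum_cons_succ, nestedSum_nil, ih, altInvPow_neg_one_two_mul,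
      altInvPow_neg_one_two_mul_add_one]
    linear_combination -two_mul_altInvPow_one_two_mul_add_one hp2 k

theorem two_mul_sum_altInvPow_one_two_mul (X : ℕ → ZMod p) (n : ℕ) :
    2 * ∑ k ∈ range n, altInvPow p 1 (2 * k) * X (2 * k) =
      ∑ i ∈ range (2 * n), altInvPow p 1 i * X i -
        ∑ i ∈ range (2 * n), altInvPow p (-1) i * X i := by
  induction n with
  | zero => simp
  | succ n ih =>
    simp only [mul_add_one, sum_range_succ, altInvPow_neg_one_two_mul,
      altInvPow_neg_one_two_mul_add_one]
    linear_combination ih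

theorem sum_altInvPow_mul_altHarm_add_mul_altHarm_succ (s : ℤ) (N : ℕ) :
    ∑ i ∈ range N,
        altInvPow p s i * ((altHarm p [1] i + altHarm p [-1] i) * altHarm p [1] (i + 1)) =
      2 * altHarm p [s, 1, 1] N + altHarm p [s, 2] N + altHarm p [s, 1, -1] N +
        altHarm p [s, -1, 1] N + altHarm p [s, -2] N +
        altHarm p [mergeExponents s 1, 1] N + altHarm p [mergeExponents s 1, -1] N := by
  have h1 (i : ℕ) : altHarm p [1] i * altHarm p [1] i =
      altHarm p [1, 1] i + altHarm p [1, 1] i + altHarm p [2] i :=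
    nestedSum_singleton_mul_singleton (altInvPow_mul 1 1) i
  have h2 (i : ℕ) : altHarm p [-1] i * altHarm p [1] i =
      altHarm p [-1, 1] i + altHarm p [1, -1] i + altHarm p [-2] i :=
    nestedSum_singleton_mul_singleton (altInvPow_mul (-1) 1) i
  simp only [nestedSum_cons _ s, nestedSum_cons _ (mergeExponents s 1), ← altInvPow_mul, mul_sum,
    ← sum_add_distrib]
  refine sum_congr rfl fun i _ ↦ ?_
  simp only [nestedSum_cons_succ, nestedSum_nil]
  linear_combination altInvPow p s i * (h1 i + h2 i)

theorem sum_altHarm_succ_mul_altHarm_succ (hp2 : p ≠ 2) {n : ℕ} (hn : 2 * n < p) :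
    ∑ k ∈ range n, altInvPow p 1 (2 * k) * (altHarm p [1] (k + 1) * altHarm p [1] (2 * k + 2)) =
      ∑ k ∈ range n, altInvPow p 1 (2 * k) * (altHarm p [1] k * altHarm p [1] (2 * k + 1)) -
        2 * altHarm p [-1] (2 * n) - 3 * altHarm p [-1, 1] (2 * n) -
        altHarm p [-1, -1] (2 * n) - 2 * altHarm p [-2] (2 * n) := by
  induction n with
  | zero => simp [nestedSum_cons_zero]
  | succ n ih =>
    have hpf : altInvPow p 1 (2 * n) * altInvPow p 1 (2 * n + 1) =
        altInvPow p 1 (2 * n) - altInvPow p 1 (2 * n + 1) := by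
      have h1 := natCast_ne_zero_of_lt (p := p) (2 * n).succ_pos (by omega)
      have h2 := natCast_ne_zero_of_lt (p := p) (2 * n + 1).succ_pos (by omega)
      rw [altInvPow_one, altInvPow_one]
      field_simp
      push_cast
      ring
    have hsq (i : ℕ) : altInvPow p (-2) i = altInvPow p 1 i * altInvPow p (-1) i :=
      (altInvPow_mul 1 (-1) i).symm
    rw [sum_range_succ, sum_range_succ, ih (by omega)]
    simp only [mul_add_one, nestedSum_cons_succ, nestedSum_nil, altHarm_one_eq_add hp2 n, hsq,
      altInvPow_neg_one_two_mul, altInvPow_neg_one_two_mul_add_one,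
      ← two_mul_altInvPow_one_two_mul_add_one hp2 n]
    linear_combination (3 * altHarm p [1] (2 * n) + altHarm p [-1] (2 * n) +
      2 * altInvPow p 1 (2 * n) + 2 * altInvPow p 1 (2 * n + 1) + 2) * hpf

theorem eight_mul_sum_altHarm_mul_altHarm_succ (hp3 : 3 < p) {n : ℕ} (hn : 2 * n = p - 1) :
    8 * ∑ k ∈ range n, altInvPow p 1 (2 * k) * (altHarm p [1] k * altHarm p [1] (2 * k + 1)) =
      5 * altHarm p [2, 1] (p - 1) - altHarm p [-1] (p - 1) ^ 3 := by
  have hp2 : p ≠ 2 := by omega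
  have hsum := two_mul_sum_altInvPow_one_two_mul (p := p)
    (fun i ↦ (altHarm p [1] i + altHarm p [-1] i) * altHarm p [1] (i + 1)) n
  simp only [← altHarm_one_eq_add hp2, hn, sum_altInvPow_mul_altHarm_add_mul_altHarm_succ] at hsum
  simp only [show mergeExponents 1 1 = 2 from rfl, show mergeExponents (-1) 1 = -2 from rfl,
    altHarm_one_one_one hp2, altHarm_one_two hp2, altHarm_one_one_neg_one hp2,
    altHarm_one_neg_one_one hp3, altHarm_one_neg_two hp2, altHarm_neg_two_one hp3,
    altHarm_neg_one_two hp2, altHarm_neg_one_one_neg_one hp2, altHarm_neg_one_neg_one_one hp3,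
    altHarm_neg_one_neg_two hp2, altHarm_neg_two_neg_one hp3] at hsum
  linear_combination 4 * hsum - mul_altHarm_neg_one_one_one hp3 +
    5 * four_mul_altHarm_two_neg_one hp3

theorem eight_mul_sum_altHarm_succ_mul_altHarm_succ (hp3 : 3 < p) {n : ℕ} (hn : 2 * n = p - 1) :
    8 * ∑ k ∈ range n,
        altInvPow p 1 (2 * k) * (altHarm p [1] (k + 1) * altHarm p [1] (2 * k + 2)) =
      5 * altHarm p [2, 1] (p - 1) - altHarm p [-1] (p - 1) ^ 3 -
        10 * altHarm p [-1] (p - 1) ^ 2 - 16 * altHarm p [-1] (p - 1) := by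
  have hp2 : p ≠ 2 := by omega
  rw [sum_altHarm_succ_mul_altHarm_succ hp2 (by omega), hn, altHarm_neg_two hp2]
  linear_combination eight_mul_sum_altHarm_mul_altHarm_succ hp3 hn -
    6 * four_mul_altHarm_neg_one_one hp3 - 4 * two_mul_altHarm_neg_one_neg_one hp3

end ParitySplitting

section Reduction

variable {p : ℕ} [Fact p.Prime]

/-- The rational `x` is `p`-integral with residue class `y`. The condition on the denominator is
what makes the cast `ℚ → ZMod p` meaningful, as it is a junk value when `p` divides `x.den`. -/
structure ReducesTo (p : ℕ) [Fact p.Prime] (x : ℚ) (y : ZMod p) : Prop where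
  den_ne_zero : (x.den : ZMod p) ≠ 0
  cast_eq : (x : ZMod p) = y

namespace ReducesTo

variable {x x' : ℚ} {y y' : ZMod p}

theorem natCast (a : ℕ) : ReducesTo p a a := ⟨by simp, by simp⟩

theorem one : ReducesTo p 1 1 := by simpa using natCast (p := p) 1

theorem ofNat (n : ℕ) [n.AtLeastTwo] :
    ReducesTo p (OfNat.ofNat n : ℚ) (OfNat.ofNat n : ZMod p) :=
  natCast n

theorem neg (h : ReducesTo p x y) : ReducesTo p (-x) (-y) :=
  ⟨by simpa using h.den_ne_zero, by simp [h.cast_eq]⟩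

theorem add (h : ReducesTo p x y) (h' : ReducesTo p x' y') : ReducesTo p (x + x') (y + y') where
  den_ne_zero := ne_zero_of_dvd_ne_zero
    (by simpa using mul_ne_zero h.den_ne_zero h'.den_ne_zero)
    (Nat.cast_dvd_cast (Rat.add_den_dvd x x'))
  cast_eq := by
    rw [Rat.cast_add_of_ne_zero h.den_ne_zero h'.den_ne_zero, h.cast_eq, h'.cast_eq]

theorem sub (h : ReducesTo p x y) (h' : ReducesTo p x' y') : ReducesTo p (x - x') (y - y') := by
  simpa only [sub_eq_add_neg] using h.add h'.neg

theorem mul (h : ReducesTo p x y) (h' : ReducesTo p x' y') : ReducesTo p (x * x') (y * y') where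
  den_ne_zero := ne_zero_of_dvd_ne_zero
    (by simpa using mul_ne_zero h.den_ne_zero h'.den_ne_zero)
    (Nat.cast_dvd_cast (Rat.mul_den_dvd x x'))
  cast_eq := by
    rw [Rat.cast_mul_of_ne_zero h.den_ne_zero h'.den_ne_zero, h.cast_eq, h'.cast_eq]

theorem inv (h : ReducesTo p x y) (hy : y ≠ 0) : ReducesTo p x⁻¹ y⁻¹ := by
  have hnum : (x.num : ZMod p) ≠ 0 := fun hx ↦
    hy (by rw [← h.cast_eq, Rat.cast_def, hx, zero_div])
  refine ⟨?_, by rw [Rat.cast_inv_of_ne_zero hnum, h.cast_eq]⟩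
  rwa [Rat.den_inv_of_ne_zero (by rintro rfl; simp at hnum), Ne, ZMod.natCast_eq_zero_iff,
    ← Int.natCast_dvd, ← ZMod.intCast_zmod_eq_zero_iff_dvd]

theorem div (h : ReducesTo p x y) (h' : ReducesTo p x' y') (hy : y' ≠ 0) :
    ReducesTo p (x / x') (y / y') := by
  simpa only [div_eq_mul_inv] using h.mul (h'.inv hy)

theorem pow (h : ReducesTo p x y) (n : ℕ) : ReducesTo p (x ^ n) (y ^ n) := by
  induction n with
  | zero => simpa only [pow_zero] using one
  | succ n ih => simpa only [pow_succ] using ih.mul h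

theorem sum {ι : Type*} {s : Finset ι} {f : ι → ℚ} {g : ι → ZMod p}
    (h : ∀ i ∈ s, ReducesTo p (f i) (g i)) : ReducesTo p (∑ i ∈ s, f i) (∑ i ∈ s, g i) := by
  classical
  induction s using Finset.induction_on with
  | empty => simpa using natCast (p := p) 0
  | insert i s hi ih =>
    rw [sum_insert hi, sum_insert hi]
    exact (h i (mem_insert_self _ _)).add (ih fun j hj ↦ h j (mem_insert_of_mem hj))

theorem ratCongr_one (h : ReducesTo p x y) (h' : ReducesTo p x' y) : ratCongr p 1 x x' := by
  obtain ⟨hden, hcast⟩ := h.sub h'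
  rw [sub_self, Rat.cast_def, div_eq_zero_iff, or_iff_left hden,
    ZMod.intCast_zmod_eq_zero_iff_dvd] at hcast
  obtain ⟨c, hc⟩ := hcast
  refine ⟨Rat.divInt c (x - x').den, ?_, fun hdvd ↦ hden ?_⟩
  · rw [pow_one, Rat.divInt_eq_div, div_mul_eq_mul_div, mul_comm]
    nth_rw 1 [← Rat.num_div_den (x - x'), hc]
    push_cast
    rfl
  · rw [ZMod.natCast_eq_zero_iff]
    exact_mod_cast (Int.natCast_dvd_natCast.2 hdvd).trans (Rat.den_dvd _ _)

end ReducesTo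

theorem reducesTo_harmonic {m : ℕ} (hm : m < p) :
    ReducesTo p (harmonic m) (altHarm p [1] m) := by
  rw [altHarm, nestedSum_singleton]
  refine ReducesTo.sum fun i hi ↦ ?_
  rw [altInvPow_one]
  exact (ReducesTo.natCast (i + 1)).inv (natCast_ne_zero_of_lt i.succ_pos (by grind))

theorem reducesTo_bernoulli {n : ℕ} (hn : n + 1 < p) :
    ReducesTo p (bernoulli n) (bernoulli n : ZMod p) := by
  induction n using Nat.strong_induction_on with
  | _ n ih =>
    have hn0 : ((n + 1 : ℕ) : ℚ) ≠ 0 := by positivity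
    have hrec : bernoulli n = ((if n + 1 = 1 then 1 else 0 : ℕ) -
        ∑ k ∈ range n, ((n + 1).choose k : ℚ) * bernoulli k) / (n + 1 : ℕ) := by
      have hsum := sum_bernoulli (n + 1)
      rw [sum_range_succ, Nat.choose_succ_self_right] at hsum
      rw [eq_div_iff hn0]
      push_cast at hsum ⊢
      linear_combination hsum
    have h := ((ReducesTo.natCast (p := p) (if n + 1 = 1 then 1 else 0)).sub
      (ReducesTo.sum fun k hk ↦ (ReducesTo.natCast ((n + 1).choose k)).mul
        (ih k (mem_range.1 hk) (by grind)))).div (ReducesTo.natCast (n + 1))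
      (natCast_ne_zero_of_lt n.succ_pos hn)
    rw [← hrec] at h
    exact ⟨h.den_ne_zero, rfl⟩

end Reduction

section PowerSums

variable {p : ℕ} [Fact p.Prime]

theorem inv_pow_eq_pow_sub {x : ZMod p} (hx : x ≠ 0) {s : ℕ} (hs : s ≤ p - 1) :
    x⁻¹ ^ s = x ^ (p - 1 - s) := by
  rw [pow_sub₀ x hx hs, ZMod.pow_card_sub_one_eq_one hx, one_mul, inv_pow]

theorem sum_natCast_succ_pow (e : ℕ) :
    ∑ k ∈ range (p - 1), ((k + 1 : ℕ) : ZMod p) ^ e = if p - 1 ∣ e then -1 else 0 := by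
  have hbij : ∑ k ∈ range (p - 1), ((k + 1 : ℕ) : ZMod p) ^ e =
      ∑ u : (ZMod p)ˣ, (u : ZMod p) ^ e :=
    sum_bij'
      (fun k hk ↦ Units.mk0 ((k + 1 : ℕ) : ZMod p) (natCast_ne_zero_of_lt k.succ_pos (by grind)))
      (fun u _ ↦ (u : ZMod p).val - 1)
      (fun _ _ ↦ mem_univ _)
      (fun u _ ↦ by grind [u.ne_zero, ZMod.val_ne_zero, ZMod.val_lt])
      (fun k hk ↦ by
        rw [Units.val_mk0, ZMod.val_cast_of_lt (by grind), Nat.add_sub_cancel])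
      (fun u _ ↦ Units.ext (by
        rw [Units.val_mk0, Nat.sub_add_cancel (by grind [u.ne_zero, ZMod.val_ne_zero]),
          ZMod.natCast_zmod_val]))
      (fun _ _ ↦ rfl)
  rw [hbij, FiniteField.sum_pow_units, ZMod.card]

theorem choose_card_sub_one {j : ℕ} (hj : j < p) : ((p - 1).choose j : ZMod p) = (-1) ^ j := by
  have hp := (Fact.out : p.Prime)
  induction j with
  | zero => simp
  | succ j ih =>
    have hpascal : p.choose (j + 1) = (p - 1).choose j + (p - 1).choose (j + 1) :=
      Nat.choose_eq_choose_pred_add hp.pos j.succ_pos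
    have hzero : (p.choose (j + 1) : ZMod p) = 0 :=
      (ZMod.natCast_eq_zero_iff _ _).2 (hp.dvd_choose_self j.succ_ne_zero hj)
    rw [hpascal, Nat.cast_add, ih (by omega)] at hzero
    rw [pow_succ]
    linear_combination hzero

theorem altHarm_one_eq_sum_bernoulli (hp2 : p ≠ 2) {m : ℕ} (hm : m < p) :
    altHarm p [1] m =
      -∑ i ∈ range (p - 1),
        (-1) ^ i * (bernoulli i : ZMod p) * ((m + 1 : ℕ) : ZMod p) ^ (p - 1 - i) := by
  have hp := (Fact.out : p.Prime).two_le
  have hleft : ReducesTo p (∑ k ∈ range (m + 1), (k : ℚ) ^ (p - 2)) (altHarm p [1] m) := by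
    rw [sum_range_succ', Nat.cast_zero, zero_pow (by omega), add_zero, altHarm, nestedSum_singleton]
    refine ReducesTo.sum fun i hi ↦ ?_
    have hi0 : ((i + 1 : ℕ) : ZMod p) ≠ 0 := natCast_ne_zero_of_lt i.succ_pos (by grind)
    rw [altInvPow_one, ← pow_one (_⁻¹), inv_pow_eq_pow_sub hi0 (by omega)]
    exact (ReducesTo.natCast (i + 1)).pow _
  have hright : ReducesTo p (∑ k ∈ range (m + 1), (k : ℚ) ^ (p - 2))
      (-∑ i ∈ range (p - 1),
        (-1) ^ i * (bernoulli i : ZMod p) * ((m + 1 : ℕ) : ZMod p) ^ (p - 1 - i)) := by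
    have hcast : ((p - 1 : ℕ) : ZMod p) = -1 := by
      rw [Nat.cast_pred (by omega), ZMod.natCast_self, zero_sub]
    have hdiv (y : ZMod p) : y / ((p - 1 : ℕ) : ZMod p) = -y := by rw [hcast, div_neg, div_one]
    rw [sum_range_pow, show p - 2 + 1 = p - 1 by omega, ← sum_neg_distrib]
    refine ReducesTo.sum fun i hi ↦ ?_
    rw [← hdiv, ← choose_card_sub_one (p := p) (j := i) (by grind),
      mul_comm ((p - 1).choose i : ZMod p), ← Nat.cast_add_one, show p - 2 + 1 = p - 1 by omega]
    exact (((reducesTo_bernoulli (by grind)).mul (ReducesTo.natCast _)).mul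
      ((ReducesTo.natCast (m + 1)).pow _)).div (ReducesTo.natCast _) (by simp [hcast])
  rw [← hleft.cast_eq, hright.cast_eq]

theorem altHarm_two_one (hp3 : 3 < p) :
    altHarm p [2, 1] (p - 1) = (bernoulli (p - 3) : ZMod p) := by
  have hdvd {i : ℕ} (hi : i ∈ range (p - 1)) : p - 1 ∣ p - 3 + (p - 1 - i) ↔ i = p - 3 := by
    rw [mem_range] at hi
    refine ⟨fun ⟨c, hc⟩ ↦ ?_, fun h ↦ ⟨1, by omega⟩⟩
    have hlt : c < 2 := Nat.lt_of_mul_lt_mul_left (a := p - 1) (by omega)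
    interval_cases c <;> omega
  have heven : Even (p - 3) := by
    have := (Fact.out : p.Prime).eq_two_or_odd
    grind
  calc altHarm p [2, 1] (p - 1)
      = ∑ m ∈ range (p - 1), -∑ i ∈ range (p - 1),
          (-1) ^ i * (bernoulli i : ZMod p) * ((m + 1 : ℕ) : ZMod p) ^ (p - 3 + (p - 1 - i)) := by
        refine sum_congr rfl fun m hm ↦ ?_
        have hm0 : ((m + 1 : ℕ) : ZMod p) ≠ 0 := natCast_ne_zero_of_lt m.succ_pos (by grind)
        have hsq : altInvPow p 2 m = ((m + 1 : ℕ) : ZMod p) ^ (p - 3) := by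
          rw [show p - 3 = p - 1 - 2 by omega, ← inv_pow_eq_pow_sub hm0 (by omega)]
          simp [altInvPow, show Int.sign 2 = 1 from rfl]
        rw [hsq, ← altHarm, altHarm_one_eq_sum_bernoulli (by omega) (by grind), mul_neg, mul_sum]
        exact congrArg _ (sum_congr rfl fun i _ ↦ by ring)
    _ = -∑ i ∈ range (p - 1), (-1) ^ i * (bernoulli i : ZMod p) *
          ∑ m ∈ range (p - 1), ((m + 1 : ℕ) : ZMod p) ^ (p - 3 + (p - 1 - i)) := by
        rw [sum_neg_distrib, sum_comm]
        simp only [mul_sum]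
    _ = -∑ i ∈ range (p - 1), if i = p - 3 then -(bernoulli (p - 3) : ZMod p) else 0 := by
        refine congrArg _ (sum_congr rfl fun i hi ↦ ?_)
        rw [sum_natCast_succ_pow, if_congr (hdvd hi) rfl rfl]
        split_ifs with h
        · rw [h, heven.neg_one_pow, one_mul, mul_neg_one]
        · rw [mul_zero]
    _ = (bernoulli (p - 3) : ZMod p) := by
        rw [sum_ite_eq', if_pos (by grind), neg_neg]

theorem sum_choose_div_succ (n : ℕ) :
    ∑ j ∈ range n, (n.choose j : ℚ) / (j + 1 : ℕ) = (2 ^ (n + 1) - 2) / (n + 1 : ℕ) := by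
  have hterm (j : ℕ) : (n.choose j : ℚ) / (j + 1 : ℕ) =
      ((n + 1).choose (j + 1) : ℚ) / (n + 1 : ℕ) := by
    rw [div_eq_div_iff (by positivity) (by positivity)]
    exact_mod_cast (mul_comm _ _).trans (Nat.add_one_mul_choose_eq n j)
  have hsum : ∑ j ∈ range n, ((n + 1).choose (j + 1) : ℚ) = 2 ^ (n + 1) - 2 := by
    have h := Nat.sum_range_choose (n + 1)
    rw [sum_range_succ, sum_range_succ', Nat.choose_self, Nat.choose_zero_right] at h
    rw [eq_sub_iff_add_eq]
    exact_mod_cast h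
  rw [sum_congr rfl fun j _ ↦ hterm j, ← sum_div, hsum]

theorem reducesTo_fermatQ (hp2 : p ≠ 2) :
    ReducesTo p (fermatQ p) (-altHarm p [-1] (p - 1) / 2) := by
  have hp := (Fact.out : p.Prime).pos
  have hq : fermatQ p = (∑ j ∈ range (p - 1), ((p - 1).choose j : ℚ) / (j + 1 : ℕ)) / 2 := by
    rw [sum_choose_div_succ, pow_succ, Nat.sub_add_cancel hp, fermatQ]
    ring
  rw [hq, altHarm, nestedSum_singleton, ← sum_neg_distrib]
  refine (ReducesTo.sum fun j hj ↦ ?_).div (ReducesTo.ofNat 2) (two_ne_zero_of_ne_two hp2)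
  have hterm : -altInvPow p (-1) j = ((p - 1).choose j : ZMod p) / (j + 1 : ℕ) := by
    rw [choose_card_sub_one (by grind)]
    simp [altInvPow, pow_succ, div_eq_mul_inv]
  rw [hterm]
  exact (ReducesTo.natCast _).div (ReducesTo.natCast _)
    (natCast_ne_zero_of_lt j.succ_pos (by grind))

end PowerSums

section MainTheorem

variable {p : ℕ} [Fact p.Prime]

theorem reducesTo_summand (hp2 : p ≠ 2) {k : ℕ} (hk : 2 * k + 2 < p) :
    ReducesTo p
      (((p : ℚ) / 2 - (k + 1 : ℕ)) * harmonic (k + 1) * harmonic (2 * (k + 1)) /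
        (((p : ℚ) + 1 - 2 * (k + 1 : ℕ)) * ((p : ℚ) + 2 * (k + 1 : ℕ))))
      (altInvPow p 1 (2 * k) * (altHarm p [1] (k + 1) * altHarm p [1] (2 * k + 2)) / 2) := by
  have h2 : (2 : ZMod p) ≠ 0 := two_ne_zero_of_ne_two hp2
  have hk1 : ((k + 1 : ℕ) : ZMod p) ≠ 0 := natCast_ne_zero_of_lt k.succ_pos (by omega)
  have hk2 : ((2 * k + 1 : ℕ) : ZMod p) ≠ 0 := natCast_ne_zero_of_lt (2 * k).succ_pos (by omega)
  have hden : ((p : ZMod p) + 1 - 2 * (k + 1 : ℕ)) * (p + 2 * (k + 1 : ℕ)) =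
      -(2 * k + 1 : ℕ) * (2 * (k + 1 : ℕ)) := by
    rw [ZMod.natCast_self]
    push_cast
    ring
  have hden_ne : ((p : ZMod p) + 1 - 2 * (k + 1 : ℕ)) * (p + 2 * (k + 1 : ℕ)) ≠ 0 := by
    rw [hden]
    exact mul_ne_zero (neg_ne_zero.2 hk2) (mul_ne_zero h2 hk1)
  have hvalue : altInvPow p 1 (2 * k) * (altHarm p [1] (k + 1) * altHarm p [1] (2 * k + 2)) / 2 =
      ((p : ZMod p) / 2 - (k + 1 : ℕ)) * altHarm p [1] (k + 1) * altHarm p [1] (2 * (k + 1)) /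
        ((p + 1 - 2 * (k + 1 : ℕ)) * (p + 2 * (k + 1 : ℕ))) := by
    rw [hden, ZMod.natCast_self, altInvPow_one, ← mul_add_one 2 k]
    field_simp
    ring
  rw [hvalue]
  have hp := ReducesTo.natCast (p := p) p
  have hsucc := ReducesTo.natCast (p := p) (k + 1)
  have htwo_mul := (ReducesTo.ofNat 2).mul hsucc
  exact ((((hp.div (.ofNat 2) h2).sub hsucc).mul (reducesTo_harmonic (by omega))).mul
    (reducesTo_harmonic (by omega))).div
      (((hp.add .one).sub htwo_mul).mul (hp.add htwo_mul)) hden_ne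

theorem reducesTo_sum_harmonic_mul_harmonic (hp2 : p ≠ 2) {n : ℕ} (hn : 2 * n < p) :
    ReducesTo p
      (∑ k ∈ Icc 1 n, ((p : ℚ) / 2 - k) * harmonic k * harmonic (2 * k) /
        (((p : ℚ) + 1 - 2 * k) * ((p : ℚ) + 2 * k)))
      ((∑ k ∈ range n,
        altInvPow p 1 (2 * k) * (altHarm p [1] (k + 1) * altHarm p [1] (2 * k + 2))) / 2) := by
  rw [← Ico_add_one_right_eq_Icc, sum_Ico_eq_sum_range, Nat.add_sub_cancel, sum_div]
  simp only [add_comm 1]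
  exact ReducesTo.sum fun k hk ↦ reducesTo_summand hp2 (by grind)

theorem sum_altHarm_succ_mul_altHarm_succ_div_two (hp3 : 3 < p) {n : ℕ} (hn : 2 * n = p - 1)
    {q : ZMod p} (hq : q = -altHarm p [-1] (p - 1) / 2) :
    (∑ k ∈ range n,
        altInvPow p 1 (2 * k) * (altHarm p [1] (k + 1) * altHarm p [1] (2 * k + 2))) / 2 =
      2 * q - 5 / 2 * q ^ 2 + 1 / 2 * q ^ 3 + 5 / 16 * altHarm p [2, 1] (p - 1) := by
  have h2 : (2 : ZMod p) ≠ 0 := two_ne_zero_of_ne_two (by omega)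
  have hsum := eight_mul_sum_altHarm_succ_mul_altHarm_succ hp3 hn
  set S := ∑ k ∈ range n,
    altInvPow p 1 (2 * k) * (altHarm p [1] (k + 1) * altHarm p [1] (2 * k + 2))
  rw [hq, show (16 : ZMod p) = 2 ^ 4 by norm_num]
  field_simp
  linear_combination hsum

end MainTheorem

theorem sum_Hk_H2k_congr (p : ℕ) (hp : p.Prime) (hp3 : 3 < p) :
    ratCongr p 1
      (∑ k ∈ Finset.Icc 1 ((p - 1) / 2),
        ((p : ℚ) / 2 - k) * harmonic k * harmonic (2 * k) /
          (((p : ℚ) + 1 - 2 * k) * ((p : ℚ) + 2 * k)))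
      (2 * fermatQ p - (5 / 2) * fermatQ p ^ 2 + (1 / 2) * fermatQ p ^ 3 +
        (5 / 16) * bernoulli (p - 3)) := by
  have : Fact p.Prime := ⟨hp⟩
  have hp2 : p ≠ 2 := by omega
  have h2 : (2 : ZMod p) ≠ 0 := two_ne_zero_of_ne_two hp2
  have h16 : (16 : ZMod p) ≠ 0 := by
    rw [show (16 : ZMod p) = 2 ^ 4 by norm_num]
    exact pow_ne_zero 4 h2
  have hn : 2 * ((p - 1) / 2) = p - 1 := Nat.two_mul_div_two_of_even (hp.even_sub_one hp2)
  have hq := reducesTo_fermatQ hp2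
  have hB := reducesTo_bernoulli (p := p) (n := p - 3) (by omega)
  rw [← altHarm_two_one hp3] at hB
  refine (reducesTo_sum_harmonic_mul_harmonic hp2 (by omega)).ratCongr_one ?_
  rw [sum_altHarm_succ_mul_altHarm_succ_div_two hp3 hn rfl]
  exact ((((ReducesTo.ofNat 2).mul hq).sub (((ReducesTo.ofNat 5).div (.ofNat 2) h2).mul
    (hq.pow 2))).add ((ReducesTo.one.div (.ofNat 2) h2).mul (hq.pow 3))).add
    (((ReducesTo.ofNat 5).div (.ofNat 16) h16).mul hB)
end

section
/- Let p > 3 be a prime. Then ∑_{k=1}^{(p-1)/2} (p/2 - k)·H_{2k}^2/((p+1-2k)(p+2k)) ≡ q_p(2) - q_p(2)^2 + (1/6)·q_p(2)^3 + (1/3)·B_{p-3} modulo p (as rational numbers). -/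
/-!
Modulo `p` the `k`-th summand is `H_{2k}² / (2 (2k - 1))`. Splitting `1 / ((2k - 1) 2k)` turns the
sum over `k` into sums over all `0 < n < p` of `H_n ^ j / n` and `(-1) ^ n H_n ^ j / n`.

Write `E = ∑ (-1) ^ n / n`, which is `-2 q_p(2)` because `binom(p - 1, n) ≡ (-1) ^ n`. Since
`H_{p - 1 - n} ≡ H_n`, products such as `E · ∑ (-1) ^ n H_n / n` can be folded onto the triangle
`k + n < p` and resummed there by partial fractions; this yields `∑ (-1) ^ n H_n / n ≡ E² / 4` and
expresses `∑ (-1) ^ n H_n² / n` through `E³` and `∑ H_n / n²`. Telescoping `H_n³` reduces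
`∑ H_n² / n` to `∑ H_n / n²` as well. Finally, Faulhaber's formula applied to
`H_{n - 1} ≡ ∑_{j < n} j ^ (p - 2)` gives `∑ H_n / n² ≡ B_{p - 3}`.
-/

open Finset
open scoped Nat

section FiniteSums

variable {M : Type*} [AddCommMonoid M]

theorem sum_Ico_one_reflect (f : ℕ → M) (n : ℕ) :
    ∑ k ∈ Ico 1 n, f (n - k) = ∑ k ∈ Ico 1 n, f k := by
  simpa using sum_Ico_reflect f 1 n.le_succ

theorem sum_Ico_one_eq_zero_of_antisymm {G : Type*} [AddCommGroup G] {f : ℕ → G} {n : ℕ}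
    (hn : Odd n) (hf : ∀ k ∈ Ico 1 n, f (n - k) = -f k) : ∑ k ∈ Ico 1 n, f k = 0 := by
  refine sum_involution (fun k _ ↦ n - k) (fun k hk ↦ by rw [hf k hk, add_neg_cancel])
    (fun k hk _ ↦ ?_) (fun k hk ↦ ?_) (fun k hk ↦ ?_) <;>
    obtain ⟨c, rfl⟩ := hn <;> simp only [mem_Ico] at hk ⊢ <;> omega

theorem sum_Ico_one_sub_pred {G : Type*} [AddCommGroup G] (f : ℕ → G) (n : ℕ) :
    ∑ k ∈ Ico 1 n, (f k - f (k - 1)) = f (n - 1) - f 0 := by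
  cases n with
  | zero => simp
  | succ n =>
    rw [Nat.add_sub_cancel, ← sum_range_sub f n, range_eq_Ico]
    exact (sum_Ico_add' (fun k ↦ f k - f (k - 1)) 0 n 1).symm

theorem sum_Icc_pairs (f : ℕ → M) (h : ℕ) :
    ∑ k ∈ Icc 1 h, (f (2 * k - 1) + f (2 * k)) = ∑ n ∈ Ico 1 (2 * h + 1), f n := by
  induction h with
  | zero => simp
  | succ h ih =>
    rw [sum_Icc_succ_top (by omega), ih, show 2 * (h + 1) + 1 = 2 * h + 1 + 1 + 1 by ring,
      sum_Ico_succ_top (b := 2 * h + 1 + 1) (by omega),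
      sum_Ico_succ_top (b := 2 * h + 1) (by omega), add_assoc]
    rfl

theorem sum_Ico_one_triangle (f : ℕ → ℕ → M) (N : ℕ) :
    ∑ n ∈ Ico 1 N, ∑ k ∈ Ico 1 (N - n), f k n = ∑ m ∈ Ico 1 N, ∑ n ∈ Ico 1 m, f (m - n) n := by
  rw [← sum_Ico_Ico_comm' 1 N fun n m ↦ f (m - n) n]
  refine sum_congr rfl fun n hn ↦ ?_
  have hshift := sum_Ico_add' (fun m ↦ f (m - n) n) 1 (N - n) n
  simpa only [Nat.add_sub_cancel, Nat.sub_add_cancel (mem_Ico.1 hn).2.le, add_comm 1 n]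
    using hshift

theorem sum_Ico_one_square (f : ℕ → ℕ → M) (N : ℕ) :
    ∑ n ∈ Ico 1 N, ∑ k ∈ Ico 1 N, f k n =
      ∑ m ∈ Ico 1 N, ∑ n ∈ Ico 1 m, (f (m - n) n + f (N - (m - n)) (N - n)) +
        ∑ n ∈ Ico 1 N, f (N - n) n := by
  have row : ∀ n ∈ Ico 1 N, ∑ k ∈ Ico 1 N, f k n =
      ∑ k ∈ Ico 1 (N - n), f k n + ∑ k ∈ Ico 1 n, f (N - k) n + f (N - n) n := by
    intro n hn
    rw [mem_Ico] at hn
    have above : ∑ k ∈ Ico 1 n, f (N - k) n = ∑ k ∈ Ico (N - n + 1) N, f k n := by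
      simpa [show N + 1 - n = N - n + 1 by omega] using
        sum_Ico_reflect (fun k ↦ f k n) 1 (show n ≤ N + 1 by omega)
    rw [above, ← sum_Ico_consecutive _ (show 1 ≤ N - n by omega) (N.sub_le n),
      sum_eq_sum_Ico_succ_bot (show N - n < N by omega)]
    abel
  have above : ∑ n ∈ Ico 1 N, ∑ k ∈ Ico 1 n, f (N - k) n =
      ∑ m ∈ Ico 1 N, ∑ n ∈ Ico 1 m, f (N - (m - n)) (N - n) := by
    rw [← sum_Ico_one_triangle fun k n ↦ f (N - k) (N - n), ← sum_Ico_one_reflect]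
  simp only [sum_congr rfl row, sum_add_distrib, above, sum_Ico_one_triangle]

end FiniteSums

section HarmonicSums

variable {K : Type*} [Field K]

/-- The generalized harmonic number `∑_{1 ≤ j ≤ n} 1 / j ^ r` in a field. It has its usual meaning
when `1, …, n` are invertible; a vanishing denominator contributes `0 ^ r`. -/
def genHarmonic (r n : ℕ) : K := ∑ j ∈ range n, ((j + 1 : ℕ) : K)⁻¹ ^ r

/-- The alternating reciprocal `(-1) ^ k / k` in a field, the weight of the alternating harmonic
sums. -/
def altRecip (k : ℕ) : K := (-1) ^ k * (k : K)⁻¹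

theorem natCast_ne_zero_of_isUnit_factorial {k n : ℕ} (hn : IsUnit (n ! : K)) (hk : 1 ≤ k)
    (hkn : k ≤ n) : (k : K) ≠ 0 :=
  fun h ↦ hn.ne_zero <| zero_dvd_iff.1 <| h ▸ Nat.cast_dvd_cast (Nat.dvd_factorial hk hkn)

theorem genHarmonic_zero (r : ℕ) : genHarmonic r 0 = (0 : K) := sum_range_zero _

theorem genHarmonic_succ (r n : ℕ) :
    genHarmonic r (n + 1) = (genHarmonic r n + ((n + 1 : ℕ) : K)⁻¹ ^ r : K) :=
  sum_range_succ _ _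

theorem genHarmonic_eq_pred_add (r : ℕ) {n : ℕ} (hn : 1 ≤ n) :
    genHarmonic r n = (genHarmonic r (n - 1) + (n : K)⁻¹ ^ r : K) := by
  obtain ⟨m, rfl⟩ := Nat.exists_eq_add_of_le' hn
  exact genHarmonic_succ r m

theorem sum_Ico_one_inv_pow (r n : ℕ) :
    ∑ k ∈ Ico 1 n, (k : K)⁻¹ ^ r = genHarmonic r (n - 1) := by
  rw [← sub_zero (genHarmonic r (n - 1)), ← genHarmonic_zero (K := K) r, ← sum_Ico_one_sub_pred]
  exact sum_congr rfl fun k hk ↦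
    (sub_eq_of_eq_add' (genHarmonic_eq_pred_add r (mem_Ico.1 hk).1)).symm

theorem sum_Ico_one_inv (n : ℕ) : ∑ k ∈ Ico 1 n, (k : K)⁻¹ = genHarmonic 1 (n - 1) := by
  simpa only [pow_one] using sum_Ico_one_inv_pow (K := K) 1 n

theorem inv_sub_mul_inv {m n : ℕ} (hm : IsUnit (m ! : K)) (hn : n ∈ Ico 1 m) :
    ((m - n : ℕ) : K)⁻¹ * (n : K)⁻¹ = (m : K)⁻¹ * ((n : K)⁻¹ + ((m - n : ℕ) : K)⁻¹) := by
  rw [mem_Ico] at hn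
  have hm0 := natCast_ne_zero_of_isUnit_factorial hm (show 1 ≤ m by omega) le_rfl
  have hn0 := natCast_ne_zero_of_isUnit_factorial hm hn.1 hn.2.le
  have hmn0 := natCast_ne_zero_of_isUnit_factorial hm (show 1 ≤ m - n by omega) (m.sub_le n)
  rw [Nat.cast_sub hn.2.le] at hmn0 ⊢
  field_simp
  ring

theorem altRecip_sq (k : ℕ) : (altRecip k : K) ^ 2 = (k : K)⁻¹ ^ 2 := by
  rw [altRecip, mul_pow, pow_right_comm, neg_one_sq, one_pow, one_mul]

theorem altRecip_sub_mul_altRecip {m n : ℕ} (hm : IsUnit (m ! : K)) (hn : n ∈ Ico 1 m) :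
    altRecip (m - n) * altRecip n = (altRecip m * ((n : K)⁻¹ + ((m - n : ℕ) : K)⁻¹) : K) := by
  have hsign : (-1 : K) ^ m = (-1) ^ (m - n) * (-1) ^ n := by
    rw [← pow_add, Nat.sub_add_cancel (mem_Ico.1 hn).2.le]
  simp only [altRecip]
  linear_combination (-1) ^ (m - n) * (-1) ^ n * inv_sub_mul_inv hm hn -
    (m : K)⁻¹ * ((n : K)⁻¹ + ((m - n : ℕ) : K)⁻¹) * hsign

theorem sum_inv_add_inv_sub (m : ℕ) :
    ∑ n ∈ Ico 1 m, ((n : K)⁻¹ + ((m - n : ℕ) : K)⁻¹) = 2 * genHarmonic 1 (m - 1) := by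
  rw [sum_add_distrib, sum_Ico_one_reflect fun n ↦ (n : K)⁻¹, sum_Ico_one_inv, two_mul]

theorem sum_inv_mul_genHarmonic_add_pred (m : ℕ) :
    ∑ n ∈ Ico 1 m, (n : K)⁻¹ * (genHarmonic 1 n + genHarmonic 1 (n - 1)) =
      genHarmonic 1 (m - 1) ^ 2 := by
  have htele := sum_Ico_one_sub_pred (fun n ↦ (genHarmonic 1 n : K) ^ 2) m
  rw [genHarmonic_zero, zero_pow two_ne_zero, sub_zero] at htele
  rw [← htele]
  refine sum_congr rfl fun n hn ↦ ?_
  rw [genHarmonic_eq_pred_add 1 (mem_Ico.1 hn).1]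
  ring

theorem sum_genHarmonic_cube_increments (m : ℕ) :
    ∑ n ∈ Ico 1 m, (3 * ((n : K)⁻¹ * genHarmonic 1 n ^ 2) -
      3 * ((n : K)⁻¹ ^ 2 * genHarmonic 1 n) + (n : K)⁻¹ ^ 3) = genHarmonic 1 (m - 1) ^ 3 := by
  have htele := sum_Ico_one_sub_pred (fun n ↦ (genHarmonic 1 n : K) ^ 3) m
  rw [genHarmonic_zero, zero_pow three_ne_zero, sub_zero] at htele
  rw [← htele]
  refine sum_congr rfl fun n hn ↦ ?_
  rw [genHarmonic_eq_pred_add 1 (mem_Ico.1 hn).1]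
  ring

theorem sum_inv_sub_mul_genHarmonic_pred (m : ℕ) :
    ∑ n ∈ Ico 1 m, ((m - n : ℕ) : K)⁻¹ * genHarmonic 1 (n - 1) =
      ∑ n ∈ Ico 1 (m - 1), ((m - 1 - n : ℕ) : K)⁻¹ * genHarmonic 1 n := by
  rcases le_or_gt m 1 with hm | hm
  · interval_cases m <;> simp
  obtain ⟨m, rfl⟩ := Nat.exists_eq_add_of_lt hm
  have hshift := sum_Ico_add' (fun n ↦ ((1 + m + 1 - n : ℕ) : K)⁻¹ * genHarmonic 1 (n - 1)) 0
    (1 + m) 1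
  rw [zero_add] at hshift
  simp only [← hshift, sum_eq_sum_Ico_succ_bot (show 0 < 1 + m by omega), Nat.add_sub_cancel,
    Nat.add_sub_add_right, genHarmonic_zero, mul_zero, zero_add]

theorem sum_inv_sub_mul_genHarmonic {m : ℕ} (hm : IsUnit (m ! : K)) :
    ∑ n ∈ Ico 1 m, ((m - n : ℕ) : K)⁻¹ * genHarmonic 1 n =
      genHarmonic 1 m ^ 2 - genHarmonic 2 m := by
  induction m with
  | zero => simp [genHarmonic_zero]
  | succ m ih =>
    have hconv : ∑ n ∈ Ico 1 (m + 1), ((m + 1 - n : ℕ) : K)⁻¹ * (n : K)⁻¹ =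
        2 * ((m + 1 : ℕ) : K)⁻¹ * genHarmonic 1 m := by
      rw [sum_congr rfl fun n hn ↦ inv_sub_mul_inv hm hn, ← mul_sum, sum_inv_add_inv_sub,
        Nat.add_sub_cancel]
      ring
    rw [sum_congr rfl fun n hn ↦ by
        rw [genHarmonic_eq_pred_add 1 (mem_Ico.1 hn).1, pow_one, mul_add],
      sum_add_distrib, sum_inv_sub_mul_genHarmonic_pred, hconv, Nat.add_sub_cancel,
      ih (hm.natCast_factorial_of_le m.le_succ), genHarmonic_succ, genHarmonic_succ]
    ring

theorem sum_inv_add_inv_sub_mul_genHarmonic_add_pred {m : ℕ} (hm : IsUnit (m ! : K)) :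
    ∑ n ∈ Ico 1 m, ((n : K)⁻¹ + ((m - n : ℕ) : K)⁻¹) * (genHarmonic 1 n + genHarmonic 1 (n - 1)) =
      2 * genHarmonic 1 (m - 1) ^ 2 + genHarmonic 1 m ^ 2 -
        (genHarmonic 2 m + genHarmonic 2 (m - 1)) := by
  have hconv : ∑ n ∈ Ico 1 m, ((m - n : ℕ) : K)⁻¹ * (genHarmonic 1 n + genHarmonic 1 (n - 1)) =
      genHarmonic 1 m ^ 2 - genHarmonic 2 m +
        (genHarmonic 1 (m - 1) ^ 2 - genHarmonic 2 (m - 1)) := by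
    simp only [mul_add, sum_add_distrib, sum_inv_sub_mul_genHarmonic_pred,
      sum_inv_sub_mul_genHarmonic hm,
      sum_inv_sub_mul_genHarmonic (hm.natCast_factorial_of_le (m.sub_le 1))]
  simp only [add_mul, sum_add_distrib, sum_inv_mul_genHarmonic_add_pred, hconv]
  ring

theorem sum_pairs_genHarmonic {h : ℕ} (hh : IsUnit ((2 * h)! : K)) :
    2 * ∑ k ∈ Icc 1 h, genHarmonic 1 (2 * k) ^ 2 * ((2 * k - 1 : ℕ) : K)⁻¹ =
      ∑ n ∈ Ico 1 (2 * h + 1), ((n : K)⁻¹ * genHarmonic 1 n ^ 2 - altRecip n * genHarmonic 1 n ^ 2 -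
        4 * (altRecip n * genHarmonic 1 n) - 2 * altRecip n +
        ((n : K)⁻¹ ^ 2 + (-1) ^ n * (n : K)⁻¹ ^ 2)) := by
  rw [← sum_Icc_pairs, mul_sum]
  refine sum_congr rfl fun k hk ↦ ?_
  rw [mem_Icc] at hk
  have hodd : (-1 : K) ^ (2 * k - 1) = -1 := Odd.neg_one_pow ⟨k - 1, by omega⟩
  have heven : (-1 : K) ^ (2 * k) = 1 := (even_two_mul k).neg_one_pow
  have hpf : ((2 * k - 1 : ℕ) : K)⁻¹ * ((2 * k : ℕ) : K)⁻¹ =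
      ((2 * k - 1 : ℕ) : K)⁻¹ - ((2 * k : ℕ) : K)⁻¹ := by
    have h1 := natCast_ne_zero_of_isUnit_factorial hh (show 1 ≤ 2 * k - 1 by omega) (by omega)
    have h2 := natCast_ne_zero_of_isUnit_factorial hh (show 1 ≤ 2 * k by omega) (by omega)
    rw [Nat.cast_pred (by omega)] at h1 ⊢
    field_simp
    ring
  simp only [altRecip, hodd, heven, genHarmonic_eq_pred_add 1 (show 1 ≤ 2 * k by omega), pow_one]
  linear_combination (4 * genHarmonic 1 (2 * k - 1) + 2 * ((2 * k : ℕ) : K)⁻¹ + 2) * hpf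

end HarmonicSums

section Reflection

variable {K : Type*} [Field K] {p : ℕ} [CharP K p]

variable (K) in
theorem natCast_ne_zero_of_lt_char {k : ℕ} (hk : 1 ≤ k) (hkp : k < p) : (k : K) ≠ 0 :=
  fun h ↦ Nat.not_dvd_of_pos_of_lt hk hkp ((CharP.cast_eq_zero_iff K p k).1 h)

variable (K) in
theorem two_ne_zero_of_two_lt_char (hp : 2 < p) : (2 : K) ≠ 0 :=
  mod_cast natCast_ne_zero_of_lt_char K (k := 2) one_le_two hp

variable (K) in
theorem three_ne_zero_of_three_lt_char (hp : 3 < p) : (3 : K) ≠ 0 :=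
  mod_cast natCast_ne_zero_of_lt_char K (k := 3) (by omega) hp

variable (K) in
theorem six_ne_zero_of_three_lt_char (hp : 3 < p) : (6 : K) ≠ 0 := by
  rw [show (6 : K) = 2 * 3 by norm_num]
  exact mul_ne_zero (two_ne_zero_of_two_lt_char K (by omega : 2 < p))
    (three_ne_zero_of_three_lt_char K hp)

variable (K) in
theorem inv_natCast_char_sub {k : ℕ} (hk : k ≤ p) : ((p - k : ℕ) : K)⁻¹ = -(k : K)⁻¹ := by
  rw [Nat.cast_sub hk, CharP.cast_eq_zero, zero_sub, inv_neg]

theorem altRecip_char_sub (hp : Odd p) {k : ℕ} (hk : k ≤ p) :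
    altRecip (p - k) = (altRecip k : K) := by
  have hsign : (-1 : K) ^ (p - k) * (-1) ^ k = -1 := by
    rw [← pow_add, Nat.sub_add_cancel hk, hp.neg_one_pow]
  have hsq : (-1 : K) ^ k * (-1) ^ k = 1 := by rw [← mul_pow, neg_one_mul, neg_neg, one_pow]
  rw [altRecip, altRecip, inv_natCast_char_sub K hk]
  linear_combination -(k : K)⁻¹ * (-1) ^ k * hsign + (k : K)⁻¹ * (-1) ^ (p - k) * hsq

theorem genHarmonic_char_pred_sub (r : ℕ) {k : ℕ} (hk : k < p) :
    genHarmonic r (p - 1 - k) = (genHarmonic r (p - 1) - (-1) ^ r * genHarmonic r k : K) := by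
  induction k with
  | zero => simp [genHarmonic_zero]
  | succ k ih =>
    have hstep := genHarmonic_eq_pred_add (K := K) r (show 1 ≤ p - 1 - k by omega)
    rw [show p - 1 - k = p - (k + 1) by omega, inv_natCast_char_sub K hk.le, neg_pow,
      show p - (k + 1) - 1 = p - 1 - (k + 1) by omega, show p - (k + 1) = p - 1 - k by omega,
      ih (by omega)] at hstep
    rw [genHarmonic_succ]
    linear_combination -hstep

theorem genHarmonic_char_pred_of_odd (hp : Odd p) {r : ℕ} (hr : Odd r) :
    genHarmonic r (p - 1) = (0 : K) := by
  rw [← sum_Ico_one_inv_pow]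
  refine sum_Ico_one_eq_zero_of_antisymm hp fun k hk ↦ ?_
  rw [inv_natCast_char_sub K (mem_Ico.1 hk).2.le, hr.neg_pow]

theorem genHarmonic_one_char_pred_sub (hp : Odd p) {k : ℕ} (hk : k < p) :
    genHarmonic 1 (p - 1 - k) = (genHarmonic 1 k : K) := by
  rw [genHarmonic_char_pred_sub 1 hk, genHarmonic_char_pred_of_odd hp odd_one]
  ring

theorem genHarmonic_one_char_sub (hp : Odd p) {k : ℕ} (hk : k ∈ Ico 1 p) :
    genHarmonic 1 (p - k) = (genHarmonic 1 (k - 1) : K) := by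
  rw [mem_Ico] at hk
  rw [show p - k = p - 1 - (k - 1) by omega, genHarmonic_one_char_pred_sub hp (by omega)]

theorem sum_alternating_inv_sq (hp : Odd p) :
    ∑ k ∈ Ico 1 p, (-1) ^ k * (k : K)⁻¹ ^ 2 = 0 := by
  refine sum_Ico_one_eq_zero_of_antisymm hp fun k hk ↦ ?_
  have hk := (mem_Ico.1 hk).2.le
  have hrefl := altRecip_char_sub (K := K) hp hk
  rw [altRecip, altRecip, inv_natCast_char_sub K hk] at hrefl
  rw [inv_natCast_char_sub K hk]
  linear_combination -(k : K)⁻¹ * hrefl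

theorem sum_altRecip_mul_comp_pred (hp : Odd p) (g : K → K) :
    ∑ k ∈ Ico 1 p, altRecip k * g (genHarmonic 1 (k - 1)) =
      ∑ k ∈ Ico 1 p, altRecip k * g (genHarmonic 1 k) := by
  rw [← sum_Ico_one_reflect fun k ↦ altRecip k * g (genHarmonic 1 k)]
  refine sum_congr rfl fun k hk ↦ ?_
  rw [altRecip_char_sub hp (mem_Ico.1 hk).2.le, genHarmonic_one_char_sub hp hk]

-- The reflection `n ↦ p - n` folds the square `1 ≤ k, n < p` onto the triangle `k + n < p`, where
-- every denominator of the partial fractions of `1 / (k * n)` is invertible.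
theorem sum_altRecip_mul_sum [Fact p.Prime] (hp : Odd p) {b : ℕ → K}
    (hb : ∀ n ∈ Ico 1 p, b (p - n) = b n) :
    (∑ k ∈ Ico 1 p, altRecip k) * ∑ n ∈ Ico 1 p, altRecip n * b n =
      2 * ∑ m ∈ Ico 1 p, altRecip m *
          ∑ n ∈ Ico 1 m, ((n : K)⁻¹ + ((m - n : ℕ) : K)⁻¹) * b n +
        ∑ n ∈ Ico 1 p, (n : K)⁻¹ ^ 2 * b n := by
  rw [sum_mul_sum, sum_comm, sum_Ico_one_square fun k n ↦ altRecip k * (altRecip n * b n), mul_sum]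
  congr 1
  · refine sum_congr rfl fun m hm ↦ ?_
    rw [mul_sum, mul_sum]
    refine sum_congr rfl fun n hn ↦ ?_
    have hmp := (mem_Ico.1 hm).2
    have hprod := altRecip_sub_mul_altRecip
      ((IsUnit.natCast_factorial_iff_of_charP (A := K) p).2 hmp) hn
    rw [mem_Ico] at hn
    rw [altRecip_char_sub hp (by omega), altRecip_char_sub hp (by omega),
      hb n (mem_Ico.2 (by omega))]
    linear_combination 2 * b n * hprod
  · refine sum_congr rfl fun n hn ↦ ?_
    rw [altRecip_char_sub hp (mem_Ico.1 hn).2.le, ← mul_assoc, ← sq, altRecip_sq]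

end Reflection

section PowerSums

variable {p : ℕ} [Fact p.Prime]

theorem sum_Ico_one_zmod {M : Type*} [AddCommMonoid M] (f : ZMod p → M) :
    ∑ k ∈ Ico 1 p, f k = ∑ u : (ZMod p)ˣ, f u := by
  symm
  refine sum_bij (fun u _ ↦ (u : ZMod p).val) (fun u _ ↦ ?_) (fun u _ v _ huv ↦ ?_)
    (fun k hk ↦ ?_) (fun u _ ↦ ?_)
  · exact mem_Ico.2 ⟨Nat.one_le_iff_ne_zero.2 ((ZMod.val_ne_zero _).2 u.ne_zero), ZMod.val_lt _⟩
  · exact Units.ext (ZMod.val_injective p huv)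
  · rw [mem_Ico] at hk
    exact ⟨Units.mk0 k (natCast_ne_zero_of_lt_char (ZMod p) hk.1 hk.2), mem_univ _,
      ZMod.val_cast_of_lt hk.2⟩
  · rw [ZMod.natCast_zmod_val]

theorem genHarmonic_prime_pred (r : ℕ) :
    genHarmonic r (p - 1) = (if p - 1 ∣ r then -1 else 0 : ZMod p) := by
  rw [← sum_Ico_one_inv_pow, sum_Ico_one_zmod fun x : ZMod p ↦ x⁻¹ ^ r]
  simpa only [ZMod.card, Equiv.inv_apply, Units.val_inv_eq_inv_val] using
    (Equiv.sum_comp (Equiv.inv (ZMod p)ˣ) fun u ↦ (u : ZMod p) ^ r).trans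
      (FiniteField.sum_pow_units (ZMod p) r)

theorem genHarmonic_two_prime_pred (hp : 3 < p) : genHarmonic 2 (p - 1) = (0 : ZMod p) := by
  rw [genHarmonic_prime_pred, if_neg fun h ↦ absurd (Nat.le_of_dvd two_pos h) (by omega)]

end PowerSums

section AlternatingSums

variable {p : ℕ} [Fact p.Prime]

theorem sum_altRecip_sq (hp : 3 < p) :
    (∑ k ∈ Ico 1 p, altRecip k) ^ 2 =
      (4 * ∑ k ∈ Ico 1 p, altRecip k * genHarmonic 1 k : ZMod p) := by
  have hodd : Odd p := (Fact.out : p.Prime).odd_of_ne_two (by omega)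
  have hprod := sum_altRecip_mul_sum (K := ZMod p) hodd (b := fun _ ↦ 1) fun _ _ ↦ rfl
  simp only [mul_one, sum_inv_add_inv_sub, sum_Ico_one_inv_pow, genHarmonic_two_prime_pred hp,
    sum_altRecip_mul_comp_pred hodd fun x ↦ x, mul_left_comm _ (2 : ZMod p), ← mul_sum] at hprod
  linear_combination hprod

theorem sum_altRecip_mul_genHarmonic_two_add_pred (hp : 3 < p) :
    ∑ k ∈ Ico 1 p, altRecip k * (genHarmonic 2 k + genHarmonic 2 (k - 1)) = (0 : ZMod p) := by
  have hodd : Odd p := (Fact.out : p.Prime).odd_of_ne_two (by omega)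
  refine sum_Ico_one_eq_zero_of_antisymm hodd fun k hk ↦ ?_
  rw [mem_Ico] at hk
  rw [altRecip_char_sub hodd hk.2.le, show p - k - 1 = p - 1 - k by omega,
    show p - k = p - 1 - (k - 1) by omega, genHarmonic_char_pred_sub 2 hk.2,
    genHarmonic_char_pred_sub 2 (by omega), genHarmonic_two_prime_pred hp]
  ring

theorem sum_inv_sq_mul_genHarmonic_pred (hp : p ≠ 2) :
    ∑ n ∈ Ico 1 p, (n : ZMod p)⁻¹ ^ 2 * genHarmonic 1 (n - 1) =
      ∑ n ∈ Ico 1 p, (n : ZMod p)⁻¹ ^ 2 * genHarmonic 1 n := by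
  have hcube : ∑ n ∈ Ico 1 p, (n : ZMod p)⁻¹ ^ 3 = 0 := by
    rw [sum_Ico_one_inv_pow,
      genHarmonic_char_pred_of_odd ((Fact.out : p.Prime).odd_of_ne_two hp) (by decide)]
  rw [← add_zero (∑ n ∈ Ico 1 p, _), ← hcube, ← sum_add_distrib]
  refine sum_congr rfl fun n hn ↦ ?_
  rw [genHarmonic_eq_pred_add 1 (mem_Ico.1 hn).1]
  ring

theorem sum_altRecip_mul_sum_altRecip_mul_genHarmonic (hp : 3 < p) :
    (∑ k ∈ Ico 1 p, altRecip k) * ∑ k ∈ Ico 1 p, altRecip k * genHarmonic 1 k =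
      (3 * ∑ k ∈ Ico 1 p, altRecip k * genHarmonic 1 k ^ 2 +
        ∑ k ∈ Ico 1 p, (k : ZMod p)⁻¹ ^ 2 * genHarmonic 1 k : ZMod p) := by
  have hodd : Odd p := (Fact.out : p.Prime).odd_of_ne_two (by omega)
  have hsymm : ∀ n ∈ Ico 1 p, genHarmonic 1 (p - n) + genHarmonic 1 (p - n - 1) =
      (genHarmonic 1 n + genHarmonic 1 (n - 1) : ZMod p) := by
    intro n hn
    rw [genHarmonic_one_char_sub hodd hn, show p - n - 1 = p - 1 - n by omega,
      genHarmonic_one_char_pred_sub hodd (mem_Ico.1 hn).2, add_comm]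
  have hprod :=
    sum_altRecip_mul_sum hodd (b := fun n ↦ genHarmonic 1 n + genHarmonic 1 (n - 1)) hsymm
  have hinner : ∀ m ∈ Ico 1 p, altRecip m * ∑ n ∈ Ico 1 m, ((n : ZMod p)⁻¹ +
      ((m - n : ℕ) : ZMod p)⁻¹) * (genHarmonic 1 n + genHarmonic 1 (n - 1)) =
      2 * (altRecip m * genHarmonic 1 (m - 1) ^ 2) + altRecip m * genHarmonic 1 m ^ 2 -
        altRecip m * (genHarmonic 2 m + genHarmonic 2 (m - 1)) := by
    intro m hm
    rw [sum_inv_add_inv_sub_mul_genHarmonic_add_pred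
      ((IsUnit.natCast_factorial_iff_of_charP p).2 (mem_Ico.1 hm).2)]
    ring
  rw [sum_congr rfl hinner, sum_sub_distrib, sum_altRecip_mul_genHarmonic_two_add_pred hp] at hprod
  have hp2 : p ≠ 2 := by omega
  simp only [mul_add, sum_add_distrib, ← mul_sum, sum_inv_sq_mul_genHarmonic_pred hp2,
    sum_altRecip_mul_comp_pred hodd fun x ↦ x, sum_altRecip_mul_comp_pred hodd (· ^ 2)] at hprod
  have h2 : (2 : ZMod p) ≠ 0 := two_ne_zero_of_two_lt_char _ (by omega : 2 < p)
  refine mul_left_cancel₀ h2 ?_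
  linear_combination hprod

theorem sum_inv_mul_genHarmonic_sq (hp : 3 < p) :
    ∑ k ∈ Ico 1 p, (k : ZMod p)⁻¹ * genHarmonic 1 k ^ 2 =
      ∑ k ∈ Ico 1 p, (k : ZMod p)⁻¹ ^ 2 * genHarmonic 1 k := by
  have hodd : Odd p := (Fact.out : p.Prime).odd_of_ne_two (by omega)
  have htele := sum_genHarmonic_cube_increments (K := ZMod p) p
  rw [sum_add_distrib, sum_sub_distrib, ← mul_sum, ← mul_sum, sum_Ico_one_inv_pow,
    genHarmonic_char_pred_of_odd hodd (by decide),
    genHarmonic_char_pred_of_odd hodd odd_one] at htele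
  have h3 : (3 : ZMod p) ≠ 0 := three_ne_zero_of_three_lt_char _ hp
  refine mul_left_cancel₀ h3 ?_
  linear_combination htele

theorem sum_genHarmonic_two_mul_sq (hp : 3 < p) :
    2 * ∑ k ∈ Icc 1 ((p - 1) / 2), genHarmonic 1 (2 * k) ^ 2 * ((2 * k - 1 : ℕ) : ZMod p)⁻¹ =
      ∑ k ∈ Ico 1 p, (k : ZMod p)⁻¹ ^ 2 * genHarmonic 1 k -
        ∑ k ∈ Ico 1 p, altRecip k * genHarmonic 1 k ^ 2 -
        4 * ∑ k ∈ Ico 1 p, altRecip k * genHarmonic 1 k - 2 * ∑ k ∈ Ico 1 p, altRecip k := by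
  have hodd : Odd p := (Fact.out : p.Prime).odd_of_ne_two (by omega)
  have hhalf : 2 * ((p - 1) / 2) + 1 = p := by
    obtain ⟨c, rfl⟩ := hodd
    omega
  rw [sum_pairs_genHarmonic ((IsUnit.natCast_factorial_iff_of_charP p).2 (by omega)), hhalf]
  simp only [sum_sub_distrib, sum_add_distrib, ← mul_sum, sum_inv_mul_genHarmonic_sq hp,
    sum_alternating_inv_sq hodd, sum_Ico_one_inv_pow, genHarmonic_two_prime_pred hp, add_zero]

end AlternatingSums

/-- The rational `x` reduces to `z` in `F`: its denominator is nonzero in `F` and its cast is `z`.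
For `F = ZMod p` this is reduction modulo `p` of a `p`-integral rational; the first condition is
what makes the cast additive and multiplicative. -/
structure RatReduces {F : Type*} [DivisionRing F] (x : ℚ) (z : F) : Prop where
  den_ne_zero : (x.den : F) ≠ 0
  cast_eq : (x : F) = z

namespace RatReduces

variable {F : Type*} [DivisionRing F] {x y : ℚ} {z w : F}

theorem natCast (n : ℕ) : RatReduces (n : ℚ) (n : F) :=
  ⟨by simp, Rat.cast_natCast n⟩

theorem ofNat (n : ℕ) [n.AtLeastTwo] : RatReduces (ofNat(n) : ℚ) (ofNat(n) : F) :=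
  mod_cast natCast n

theorem one : RatReduces 1 (1 : F) :=
  ⟨by simp, Rat.cast_one⟩

theorem add (hx : RatReduces x z) (hy : RatReduces y w) : RatReduces (x + y) (z + w) where
  den_ne_zero := ne_zero_of_dvd_ne_zero
    (by simpa using mul_ne_zero hx.den_ne_zero hy.den_ne_zero)
    (Nat.cast_dvd_cast (Rat.add_den_dvd x y))
  cast_eq := by
    rw [Rat.cast_add_of_ne_zero hx.den_ne_zero hy.den_ne_zero, hx.cast_eq, hy.cast_eq]

theorem mul (hx : RatReduces x z) (hy : RatReduces y w) : RatReduces (x * y) (z * w) where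
  den_ne_zero := ne_zero_of_dvd_ne_zero
    (by simpa using mul_ne_zero hx.den_ne_zero hy.den_ne_zero)
    (Nat.cast_dvd_cast (Rat.mul_den_dvd x y))
  cast_eq := by
    rw [Rat.cast_mul_of_ne_zero hx.den_ne_zero hy.den_ne_zero, hx.cast_eq, hy.cast_eq]

theorem neg (hx : RatReduces x z) : RatReduces (-x) (-z) where
  den_ne_zero := hx.den_ne_zero
  cast_eq := by rw [Rat.cast_neg, hx.cast_eq]

theorem sub (hx : RatReduces x z) (hy : RatReduces y w) : RatReduces (x - y) (z - w) := by
  simpa only [sub_eq_add_neg] using hx.add hy.neg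

theorem inv (hx : RatReduces x z) (hz : z ≠ 0) : RatReduces x⁻¹ z⁻¹ := by
  have hnum : (x.num : F) ≠ 0 := by
    rintro h
    rw [← hx.cast_eq, Rat.cast_def, h, zero_div] at hz
    exact hz rfl
  refine ⟨?_, by rw [Rat.cast_inv_of_ne_zero hnum, hx.cast_eq]⟩
  rw [Rat.den_inv_of_ne_zero (by rintro rfl; simp at hnum)]
  rcases x.num.natAbs_eq with h | h <;> rw [h] at hnum <;> simpa using hnum

theorem div (hx : RatReduces x z) (hy : RatReduces y w) (hw : w ≠ 0) :
    RatReduces (x / y) (z / w) := by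
  simpa only [div_eq_mul_inv] using hx.mul (hy.inv hw)

theorem pow (hx : RatReduces x z) (n : ℕ) : RatReduces (x ^ n) (z ^ n) := by
  induction n with
  | zero => simpa using natCast (F := F) 1
  | succ n ih => simpa only [pow_succ] using ih.mul hx

theorem sum {ι : Type*} {s : Finset ι} {f : ι → ℚ} {g : ι → F}
    (h : ∀ i ∈ s, RatReduces (f i) (g i)) : RatReduces (∑ i ∈ s, f i) (∑ i ∈ s, g i) := by
  classical
  induction s using Finset.induction_on with
  | empty => simpa using natCast (F := F) 0
  | insert i s hi ih =>
    rw [sum_insert hi, sum_insert hi]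
    exact (h i (mem_insert_self i s)).add (ih fun j hj ↦ h j (mem_insert_of_mem hj))

theorem ratCongr_one {p : ℕ} [Fact p.Prime] {z : ZMod p} (hx : RatReduces x z)
    (hy : RatReduces y z) : ratCongr p 1 x y := by
  have hxy := hx.sub hy
  rw [sub_self] at hxy
  obtain ⟨m, hm⟩ : (p : ℤ) ∣ (x - y).num := by
    rw [← ZMod.intCast_zmod_eq_zero_iff_dvd]
    simpa [Rat.cast_def, hxy.den_ne_zero] using hxy.cast_eq
  refine ⟨m / ((x - y).den : ℤ), ?_, fun hdvd ↦ hxy.den_ne_zero ?_⟩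
  · have hfrac := Rat.num_div_den (x - y)
    rw [hm] at hfrac
    push_cast at hfrac ⊢
    linear_combination -hfrac
  · rw [ZMod.natCast_eq_zero_iff]
    exact hdvd.trans (by exact_mod_cast Rat.den_dvd m (x - y).den)

end RatReduces

theorem ratReduces_harmonic {K : Type*} [Field K] {n : ℕ} (hn : IsUnit (n ! : K)) :
    RatReduces (harmonic n) (genHarmonic 1 n : K) := by
  simp only [harmonic, genHarmonic, pow_one]
  refine RatReduces.sum fun i hi ↦ (RatReduces.natCast _).inv ?_
  exact natCast_ne_zero_of_isUnit_factorial hn (by omega) (mem_range.1 hi)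

section FermatQuotient

theorem sum_choose_pred_div {n : ℕ} (hn : 1 ≤ n) :
    ∑ k ∈ Ico 1 n, ((n - 1).choose (k - 1) : ℚ) / k = (2 ^ n - 2) / n := by
  have hn0 : (n : ℚ) ≠ 0 := by positivity
  have hterm : ∀ k ∈ Ico 1 n, ((n - 1).choose (k - 1) : ℚ) / k = n.choose k / n := by
    intro k hk
    obtain ⟨hk1, -⟩ := mem_Ico.1 hk
    have hk0 : (k : ℚ) ≠ 0 := by positivity
    have habs := Nat.add_one_mul_choose_eq (n - 1) (k - 1)
    rw [Nat.sub_add_cancel hn, Nat.sub_add_cancel hk1] at habs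
    rw [div_eq_div_iff hk0 hn0, mul_comm]
    exact_mod_cast habs
  have hbinom : (∑ k ∈ range (n + 1), n.choose k : ℚ) = 2 ^ n := mod_cast n.sum_range_choose
  rw [sum_range_succ, range_eq_Ico, sum_eq_sum_Ico_succ_bot hn, n.choose_zero_right,
    n.choose_self] at hbinom
  rw [sum_congr rfl hterm, ← sum_div, ← hbinom]
  push_cast
  ring

variable {K : Type*} [Field K] {p : ℕ} [CharP K p] [Fact p.Prime]

theorem natCast_choose_char_pred {k : ℕ} (hk : k < p) : ((p - 1).choose k : K) = (-1) ^ k := by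
  have hp : p.Prime := Fact.out
  induction k with
  | zero => simp
  | succ k ih =>
    have hpascal : (p.choose (k + 1) : K) = (p - 1).choose k + (p - 1).choose (k + 1) := by
      rw [← Nat.cast_add, ← Nat.choose_succ_succ', Nat.sub_add_cancel hp.one_le]
    rw [(CharP.cast_eq_zero_iff K p _).2 (hp.dvd_choose_self k.succ_ne_zero hk),
      ih (by omega)] at hpascal
    rw [pow_succ]
    linear_combination -hpascal

theorem ratReduces_fermatQ (hp : p ≠ 2) :
    RatReduces (fermatQ p) (-(∑ k ∈ Ico 1 p, altRecip k) / 2 : K) := by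
  have hp1 := (Fact.out : p.Prime).one_le
  have h2 : (2 : K) ≠ 0 :=
    two_ne_zero_of_two_lt_char K (lt_of_le_of_ne (Fact.out : p.Prime).two_le hp.symm)
  have hq : fermatQ p = (∑ k ∈ Ico 1 p, ((p - 1).choose (k - 1) : ℚ) / k) / 2 := by
    rw [sum_choose_pred_div hp1, fermatQ, ← Nat.sub_add_cancel hp1, Nat.add_sub_cancel, pow_succ]
    push_cast
    ring
  rw [hq, ← sum_neg_distrib]
  refine (RatReduces.sum fun k hk ↦ ?_).div (.ofNat 2) h2
  rw [mem_Ico] at hk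
  convert (RatReduces.natCast ((p - 1).choose (k - 1))).div (RatReduces.natCast k)
    (natCast_ne_zero_of_lt_char K hk.1 hk.2) using 1
  rw [natCast_choose_char_pred (by omega), altRecip, ← Nat.sub_add_cancel hk.1, pow_succ,
    Nat.add_sub_cancel]
  ring

end FermatQuotient

section Bernoulli

theorem bernoulli_eq_div (n : ℕ) :
    bernoulli n = (((if n + 1 = 1 then 1 else 0 : ℕ) : ℚ) -
      ∑ k ∈ range n, ((n + 1).choose k : ℚ) * bernoulli k) / ((n + 1 : ℕ) : ℚ) := by
  have hrec := sum_bernoulli (n + 1)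
  rw [sum_range_succ, Nat.choose_succ_self_right] at hrec
  have hn0 : ((n + 1 : ℕ) : ℚ) ≠ 0 := by positivity
  rw [eq_div_iff hn0]
  push_cast at hrec ⊢
  linear_combination hrec

theorem ratReduces_bernoulli {K : Type*} [Field K] {n : ℕ} (hn : IsUnit ((n + 1)! : K)) :
    RatReduces (bernoulli n) (bernoulli n : K) := by
  induction n using Nat.strong_induction_on with
  | _ n ih =>
    have hsum : RatReduces (∑ k ∈ range n, ((n + 1).choose k : ℚ) * bernoulli k)
        (∑ k ∈ range n, ((n + 1).choose k : K) * (bernoulli k : K)) := by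
      refine RatReduces.sum fun k hk ↦ (RatReduces.natCast _).mul ?_
      rw [mem_range] at hk
      exact ih k hk (hn.natCast_factorial_of_le (by omega))
    have hrec := ((RatReduces.natCast (if n + 1 = 1 then 1 else 0)).sub hsum).div
      (RatReduces.natCast (n + 1)) (natCast_ne_zero_of_isUnit_factorial hn (by omega) le_rfl)
    rw [← bernoulli_eq_div] at hrec
    exact ⟨hrec.den_ne_zero, rfl⟩

theorem sum_range_pow_of_isUnit_factorial {K : Type*} [Field K] {m : ℕ}
    (hm : IsUnit ((m + 1)! : K)) (n : ℕ) :
    ∑ k ∈ range n, (k : K) ^ m = ∑ i ∈ range (m + 1),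
      (bernoulli i : K) * (m + 1).choose i * (n : K) ^ (m + 1 - i) / ((m + 1 : ℕ) : K) := by
  have hleft : RatReduces (∑ k ∈ range n, (k : ℚ) ^ m) (∑ k ∈ range n, (k : K) ^ m) :=
    RatReduces.sum fun k _ ↦ (RatReduces.natCast k).pow m
  rw [← hleft.cast_eq, sum_range_pow, ← Nat.cast_add_one]
  refine (RatReduces.sum fun i hi ↦ ?_).cast_eq
  rw [mem_range] at hi
  exact (((ratReduces_bernoulli (hm.natCast_factorial_of_le (by omega))).mul
    (RatReduces.natCast _)).mul ((RatReduces.natCast n).pow _)).div (RatReduces.natCast _)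
    (natCast_ne_zero_of_isUnit_factorial hm (by omega) le_rfl)

variable {p : ℕ} [Fact p.Prime]

theorem pow_prime_pred_sub {x : ZMod p} (hx : x ≠ 0) {r : ℕ} (hr : r ≤ p - 1) :
    x ^ (p - 1 - r) = x⁻¹ ^ r := by
  rw [pow_sub₀ x hx hr, ZMod.pow_card_sub_one_eq_one hx, one_mul, inv_pow]

theorem genHarmonic_pred_eq_sum_bernoulli (hp : p ≠ 2) {n : ℕ} (hn : n ∈ Ico 1 p) :
    genHarmonic 1 (n - 1) =
      -∑ i ∈ range (p - 1), (-1) ^ i * (bernoulli i : ZMod p) * (n : ZMod p)⁻¹ ^ i := by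
  have hp2 : 2 < p := lt_of_le_of_ne (Fact.out : p.Prime).two_le hp.symm
  have hpred : p - 2 + 1 = p - 1 := by omega
  obtain ⟨hn1, hnp⟩ := mem_Ico.1 hn
  have hfaulhaber := sum_range_pow_of_isUnit_factorial (K := ZMod p) (m := p - 2)
    ((IsUnit.natCast_factorial_iff_of_charP p).2 (by omega)) n
  rw [hpred, range_eq_Ico, sum_eq_sum_Ico_succ_bot hn1, Nat.cast_zero,
    zero_pow (by omega), zero_add, zero_add] at hfaulhaber
  have hinv : ∀ k ∈ Ico 1 n, (k : ZMod p) ^ (p - 2) = (k : ZMod p)⁻¹ := by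
    intro k hk
    obtain ⟨hk1, hkn⟩ := mem_Ico.1 hk
    simpa only [pow_one, Nat.sub_sub] using pow_prime_pred_sub
      (natCast_ne_zero_of_lt_char (ZMod p) hk1 (by omega)) (r := 1) (by omega)
  rw [← sum_Ico_one_inv, ← sum_congr rfl hinv, hfaulhaber, ← sum_neg_distrib]
  refine sum_congr rfl fun i hi ↦ ?_
  rw [mem_range] at hi
  have hlast : ((p - 1 : ℕ) : ZMod p) = -1 := by
    rw [Nat.cast_pred (by omega), CharP.cast_eq_zero, zero_sub]
  rw [natCast_choose_char_pred (by omega), hlast,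
    pow_prime_pred_sub (natCast_ne_zero_of_lt_char (ZMod p) hn1 hnp) hi.le]
  ring

theorem sum_inv_pow_mul_genHarmonic_pred (hp : p ≠ 2) {t : ℕ} (ht : t ∈ Ico 1 p) :
    ∑ n ∈ Ico 1 p, (n : ZMod p)⁻¹ ^ t * genHarmonic 1 (n - 1) =
      (-1) ^ t * (bernoulli (p - 1 - t) : ZMod p) := by
  obtain ⟨ht1, htp⟩ := mem_Ico.1 ht
  have hexpand : ∀ n ∈ Ico 1 p, (n : ZMod p)⁻¹ ^ t * genHarmonic 1 (n - 1) =
      ∑ i ∈ range (p - 1), -((-1) ^ i * (bernoulli i : ZMod p)) * (n : ZMod p)⁻¹ ^ (t + i) := by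
    intro n hn
    rw [genHarmonic_pred_eq_sum_bernoulli hp hn, ← sum_neg_distrib, mul_sum]
    refine sum_congr rfl fun i _ ↦ ?_
    rw [pow_add]
    ring
  rw [sum_congr rfl hexpand, sum_comm]
  simp only [← mul_sum, sum_Ico_one_inv_pow, genHarmonic_prime_pred]
  have hsign : (-1 : ZMod p) ^ (p - 1 - t) = (-1) ^ t := by
    rw [pow_prime_pred_sub (neg_ne_zero.2 one_ne_zero) (by omega), inv_neg_one]
  rw [sum_eq_single_of_mem (p - 1 - t) (mem_range.2 (by omega)), if_pos ⟨1, by omega⟩, hsign]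
  · ring
  · intro i hi hne
    rw [mem_range] at hi
    rw [if_neg, mul_zero]
    rintro ⟨c, hc⟩
    have hc2 : c < 2 := by
      by_contra! h
      have := Nat.mul_le_mul_left (p - 1) h
      omega
    interval_cases c <;> omega

theorem sum_inv_sq_mul_genHarmonic (hp : 3 < p) :
    ∑ n ∈ Ico 1 p, (n : ZMod p)⁻¹ ^ 2 * genHarmonic 1 n = (bernoulli (p - 3) : ZMod p) := by
  rw [← sum_inv_sq_mul_genHarmonic_pred (by omega),
    sum_inv_pow_mul_genHarmonic_pred (by omega) (mem_Ico.2 (by omega))]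
  simp [Nat.sub_sub]

end Bernoulli

section Congruence

variable {p : ℕ} [Fact p.Prime]

theorem sum_genHarmonic_two_mul_sq_eq (hp : 3 < p) {q : ZMod p}
    (hq : q = -(∑ k ∈ Ico 1 p, altRecip k) / 2) :
    (∑ k ∈ Icc 1 ((p - 1) / 2), genHarmonic 1 (2 * k) ^ 2 * ((2 * k - 1 : ℕ) : ZMod p)⁻¹) / 2 =
      q - q ^ 2 + 1 / 6 * q ^ 3 + 1 / 3 * (bernoulli (p - 3) : ZMod p) := by
  have h2 : (2 : ZMod p) ≠ 0 := two_ne_zero_of_two_lt_char _ (by omega : 2 < p)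
  have h3 : (3 : ZMod p) ≠ 0 := three_ne_zero_of_three_lt_char _ hp
  have h6 : (6 : ZMod p) ≠ 0 := six_ne_zero_of_three_lt_char _ hp
  have hpair := sum_genHarmonic_two_mul_sq hp
  have hsq := sum_altRecip_sq hp
  have hprod := sum_altRecip_mul_sum_altRecip_mul_genHarmonic hp
  rw [sum_inv_sq_mul_genHarmonic hp] at hpair hprod
  have hE : ∑ k ∈ Ico 1 p, altRecip k = -2 * q := by
    rw [hq]
    field_simp
  rw [hE] at hpair hsq hprod
  have hF : ∑ k ∈ Ico 1 p, altRecip k * genHarmonic 1 k = q ^ 2 := by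
    refine mul_left_cancel₀ (mul_ne_zero h2 h2) ?_
    linear_combination -hsq
  rw [hF] at hpair hprod
  generalize (∑ k ∈ Icc 1 ((p - 1) / 2), _ : ZMod p) = S at hpair ⊢
  field_simp
  linear_combination 9 * hpair + 3 * hprod

theorem ratReduces_summand (hp : 3 < p) {k : ℕ} (hk : k ∈ Icc 1 ((p - 1) / 2)) :
    RatReduces (((p : ℚ) / 2 - k) * harmonic (2 * k) ^ 2 /
        (((p : ℚ) + 1 - 2 * k) * ((p : ℚ) + 2 * k)))
      (genHarmonic 1 (2 * k) ^ 2 * ((2 * k - 1 : ℕ) : ZMod p)⁻¹ / 2) := by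
  rw [mem_Icc] at hk
  have hodd0 := natCast_ne_zero_of_lt_char (ZMod p) (show 1 ≤ 2 * k - 1 by omega) (by omega)
  have heven0 := natCast_ne_zero_of_lt_char (ZMod p) (show 1 ≤ 2 * k by omega) (by omega)
  have hp0 : (p : ZMod p) = 0 := CharP.cast_eq_zero _ p
  have hharm : RatReduces (harmonic (2 * k)) (genHarmonic 1 (2 * k) : ZMod p) :=
    ratReduces_harmonic ((IsUnit.natCast_factorial_iff_of_charP p).2 (by omega))
  rw [Nat.cast_pred (by omega)] at hodd0 ⊢
  push_cast at hodd0 heven0 ⊢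
  have h2 := left_ne_zero_of_mul heven0
  have hden : ((p : ZMod p) + 1 - 2 * k) * (p + 2 * k) ≠ 0 := by
    rw [hp0, zero_add, zero_add, ← neg_sub]
    exact mul_ne_zero (neg_ne_zero.2 hodd0) heven0
  have hpR := RatReduces.natCast (F := ZMod p) p
  have hkR := RatReduces.natCast (F := ZMod p) k
  have htwoR := RatReduces.ofNat (F := ZMod p) 2
  have hterm := (((hpR.div htwoR h2).sub hkR).mul (hharm.pow 2)).div
    (((hpR.add RatReduces.one).sub (htwoR.mul hkR)).mul (hpR.add (htwoR.mul hkR))) hden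
  convert hterm using 1
  rw [eq_div_iff hden, hp0]
  field_simp
  ring

end Congruence

theorem sum_H2k_sq_congr (p : ℕ) (hp : p.Prime) (hp3 : 3 < p) :
    ratCongr p 1
      (∑ k ∈ Finset.Icc 1 ((p - 1) / 2),
        ((p : ℚ) / 2 - k) * harmonic (2 * k) ^ 2 /
          (((p : ℚ) + 1 - 2 * k) * ((p : ℚ) + 2 * k)))
      (fermatQ p - fermatQ p ^ 2 + (1 / 6) * fermatQ p ^ 3 + (1 / 3) * bernoulli (p - 3)) := by
  have : Fact p.Prime := ⟨hp⟩
  have h3 : (3 : ZMod p) ≠ 0 := three_ne_zero_of_three_lt_char _ hp3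
  have h6 : (6 : ZMod p) ≠ 0 := six_ne_zero_of_three_lt_char _ hp3
  have hq : RatReduces (fermatQ p) (-(∑ k ∈ Ico 1 p, altRecip k) / 2 : ZMod p) :=
    ratReduces_fermatQ (by omega)
  have hB : RatReduces (bernoulli (p - 3)) (bernoulli (p - 3) : ZMod p) :=
    ratReduces_bernoulli ((IsUnit.natCast_factorial_iff_of_charP p).2 (by omega))
  have hleft := RatReduces.sum fun k hk ↦ ratReduces_summand hp3 hk
  rw [← sum_div, sum_genHarmonic_two_mul_sq_eq hp3 rfl] at hleft
  exact hleft.ratCongr_one <|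
    ((hq.sub (hq.pow 2)).add ((RatReduces.one.div (.ofNat 6) h6).mul (hq.pow 3))).add
      ((RatReduces.one.div (.ofNat 3) h3).mul hB)
end
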